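/- arXiv:2209.05028 — 3 statements merged into one kernel-verified Lean document; each statement's English description precedes it below -/
import Mathlib

section
/- In the multinomial assignment setting, if m(n)·n^{-2}/log n → ∞ as n → ∞, then E[max_{σ ∈ S_n} Σ_{i=1}^n X_{iσ(i)}] = (m(n)/n)(1+o(1)); that is, (n/m(n))·E[max_{σ} Σ_{i=1}^n X_{iσ(i)}] → 1 as n → ∞. -/
open MeasureTheory Filter Real

noncomputable section

/-- The uniform measure on the `n × n` grid of cells. -/
def cellMeasure (n : ℕ) : Measure (Fin n × Fin n) :=
  ((n : ENNReal) ^ 2)⁻¹ • Measure.count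

/-- The law of `m` i.i.d. points, each uniformly distributed on the `n × n` grid;
under this measure the matrix of cell counts is multinomial `M(m, n²)`. -/
def gridMeasure (m n : ℕ) : Measure (Fin m → Fin n × Fin n) :=
  Measure.pi fun _ => cellMeasure n

/-- `X_{ij}`: the number of the `m` points falling in cell `(i, j)`. -/
def cellCount {m n : ℕ} (i j : Fin n) (ω : Fin m → Fin n × Fin n) : ℕ :=
  (Finset.univ.filter fun k => ω k = (i, j)).card

/-- The assignment sum `S(σ) = ∑ i, X_{i σ(i)}`. -/
def assignSum {m n : ℕ} (σ : Equiv.Perm (Fin n)) (ω : Fin m → Fin n × Fin n) : ℝ :=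
  ∑ i, (cellCount i (σ i) ω : ℝ)

/-- `max_{σ ∈ S_n} S(σ)`. -/
def maxAssign {m n : ℕ} (ω : Fin m → Fin n × Fin n) : ℝ :=
  ⨆ σ : Equiv.Perm (Fin n), assignSum σ ω

/-- `E[max_{σ ∈ S_n} S(σ)]`. -/
def EmaxAssign (m n : ℕ) : ℝ :=
  ∫ ω, maxAssign ω ∂(gridMeasure m n)

lemma aux_cell_prob (n : ℕ) (hn : 0 < n) : IsProbabilityMeasure (cellMeasure n) := by
  constructor
  have h0 : ((n : ENNReal) ^ 2) ≠ 0 := by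
    have : (n : ENNReal) ≠ 0 := by exact_mod_cast hn.ne'
    positivity
  have h1 : ((n : ENNReal) ^ 2) ≠ ⊤ := by simp
  simp only [cellMeasure, Measure.smul_apply, smul_eq_mul]
  rw [← Finset.coe_univ, Measure.count_apply_finset]
  simp only [Finset.card_univ, Fintype.card_prod, Fintype.card_fin, Nat.cast_mul]
  rw [← sq, ENNReal.inv_mul_cancel h0 h1]

lemma aux_cell_integral (n : ℕ) (f : Fin n × Fin n → ℝ) :
    ∫ x, f x ∂(cellMeasure n) = ((n : ℝ) ^ 2)⁻¹ * ∑ x, f x := by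
  simp [cellMeasure, integral_smul_measure]

lemma aux_assignSum {m n : ℕ} (σ : Equiv.Perm (Fin n)) (ω : Fin m → Fin n × Fin n) :
    assignSum σ ω = ∑ k, (if (ω k).2 = σ (ω k).1 then (1 : ℝ) else 0) := by
  simp only [assignSum, cellCount, Finset.card_filter, Nat.cast_sum]
  rw [Finset.sum_comm]
  refine Finset.sum_congr rfl fun k _ => ?_
  rw [Finset.sum_eq_single (ω k).1]
  · simp [Prod.ext_iff]
  · intro b _ hb
    simp [Prod.ext_iff, hb.symm]
  · simp

lemma aux_graph_sum {n : ℕ} (σ : Equiv.Perm (Fin n)) (c : ℝ) :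
    ∑ x : Fin n × Fin n, (if x.2 = σ x.1 then c else 0) = n * c := by
  rw [Fintype.sum_prod_type]
  simp

lemma aux_lower (m n : ℕ) (hn : 0 < n) : (m : ℝ) / n ≤ EmaxAssign m n := by
  have := aux_cell_prob n hn
  have : IsProbabilityMeasure (gridMeasure m n) := by unfold gridMeasure; infer_instance
  have hn' : (n : ℝ) ≠ 0 := by exact_mod_cast hn.ne'
  have h1 : ∫ ω, assignSum (1 : Equiv.Perm (Fin n)) ω ∂(gridMeasure m n) = (m : ℝ) / n := by
    simp only [aux_assignSum]
    rw [integral_finsetSum _ (fun _ _ => Integrable.of_finite)]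
    have : ∀ k : Fin m, ∫ ω : Fin m → Fin n × Fin n,
        (if (ω k).2 = (1 : Equiv.Perm (Fin n)) (ω k).1 then (1 : ℝ) else 0) ∂(gridMeasure m n)
        = (n : ℝ)⁻¹ := by
      intro k
      have := (measurePreserving_eval (fun _ : Fin m => cellMeasure n) k).map_eq
      have h2 := integral_map (μ := gridMeasure m n) (φ := Function.eval k)
        (measurable_pi_apply k).aemeasurable
        (f := fun x : Fin n × Fin n =>
          if x.2 = (1 : Equiv.Perm (Fin n)) x.1 then (1 : ℝ) else 0)
        (measurable_of_finite _).aestronglyMeasurable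
      unfold gridMeasure at h2 ⊢
      rw [this, aux_cell_integral, aux_graph_sum] at h2
      simp only [Function.eval] at h2
      rw [← h2]
      field_simp
    rw [Finset.sum_congr rfl (fun k _ => this k)]
    simp [div_eq_mul_inv]
  rw [← h1]
  refine integral_mono Integrable.of_finite Integrable.of_finite fun ω => ?_
  exact le_ciSup (f := fun σ : Equiv.Perm (Fin n) => assignSum σ ω) (Set.finite_range _).bddAbove 1

lemma aux_mgf (m n : ℕ) (hn : 0 < n) (σ : Equiv.Perm (Fin n)) (t : ℝ) :
    ∫ ω, exp (t * assignSum σ ω) ∂(gridMeasure m n) ≤ exp (m * ((exp t - 1) / n)) := by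
  have := aux_cell_prob n hn
  have hn' : (n : ℝ) ≠ 0 := by exact_mod_cast hn.ne'
  have h1 : ∀ ω : Fin m → Fin n × Fin n, exp (t * assignSum σ ω)
      = ∏ k, (1 + if (ω k).2 = σ (ω k).1 then exp t - 1 else 0) := by
    intro ω
    rw [aux_assignSum, Finset.mul_sum, Real.exp_sum]
    refine Finset.prod_congr rfl fun k _ => ?_
    split_ifs <;> simp
  simp only [h1]
  unfold gridMeasure
  rw [integral_fintype_prod_eq_prod (μ := fun _ : Fin m => cellMeasure n)
    (f := fun _ (x : Fin n × Fin n) => (1 + if x.2 = σ x.1 then exp t - 1 else 0))]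
  have h2 : ∫ x : Fin n × Fin n, (1 + if x.2 = σ x.1 then exp t - 1 else 0) ∂(cellMeasure n)
      = (exp t - 1) / n + 1 := by
    rw [aux_cell_integral, Finset.sum_add_distrib, aux_graph_sum]
    simp
    field_simp
    ring
  rw [Finset.prod_const, Finset.card_univ, Fintype.card_fin, h2, Real.exp_nat_mul]
  refine pow_le_pow_left₀ ?_ (Real.add_one_le_exp _) _
  have h3 : (exp t - 1) / n + 1 = exp t / n + (n - 1) / n := by field_simp; ring
  have h4 : (1 : ℝ) ≤ n := by exact_mod_cast hn
  rw [h3]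
  have : 0 ≤ ((n : ℝ) - 1) / n := div_nonneg (by linarith) (by linarith)
  positivity

lemma aux_upper (m n : ℕ) (hn : 0 < n) (t : ℝ) (ht : 0 < t) :
    t * EmaxAssign m n ≤ n * log n + m * ((exp t - 1) / n) := by
  have := aux_cell_prob n hn
  have : IsProbabilityMeasure (gridMeasure m n) := by unfold gridMeasure; infer_instance
  have hn' : (0 : ℝ) < n := by exact_mod_cast hn
  set b : ℝ := m * ((exp t - 1) / n) with hb
  set a : ℝ := n * log n + b with ha
  have hpt : ∀ ω : Fin m → Fin n × Fin n, t * maxAssign ω ≤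
      (a - 1) + exp (-a) * ∑ σ : Equiv.Perm (Fin n), exp (t * assignSum σ ω) := by
    intro ω
    obtain ⟨σ, hσ⟩ := exists_eq_ciSup_of_finite (f := fun σ : Equiv.Perm (Fin n) => assignSum σ ω)
    have h1 : maxAssign ω = assignSum σ ω := hσ.symm
    rw [h1]
    have h2 : exp (t * assignSum σ ω) ≤ ∑ σ : Equiv.Perm (Fin n), exp (t * assignSum σ ω) :=
      Finset.single_le_sum (f := fun σ : Equiv.Perm (Fin n) => exp (t * assignSum σ ω))
        (fun _ _ => (exp_pos _).le) (Finset.mem_univ σ)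
    have h3 := Real.add_one_le_exp (-a + t * assignSum σ ω)
    rw [Real.exp_add] at h3
    have h4 := mul_le_mul_of_nonneg_left h2 (exp_pos (-a)).le
    linarith
  have hint : t * EmaxAssign m n ≤ (a - 1) + exp (-a) *
      ∑ σ : Equiv.Perm (Fin n), ∫ ω, exp (t * assignSum σ ω) ∂(gridMeasure m n) := by
    unfold EmaxAssign
    rw [← integral_const_mul]
    refine (integral_mono Integrable.of_finite Integrable.of_finite hpt).trans_eq ?_
    rw [integral_add Integrable.of_finite Integrable.of_finite, integral_const_mul,
      integral_finsetSum _ (fun _ _ => Integrable.of_finite)]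
    simp
  have hsum : ∑ σ : Equiv.Perm (Fin n), ∫ ω, exp (t * assignSum σ ω) ∂(gridMeasure m n)
      ≤ exp a := by
    refine (Finset.sum_le_sum fun σ _ => aux_mgf m n hn σ t).trans ?_
    rw [Finset.sum_const, Finset.card_univ, Fintype.card_perm, Fintype.card_fin, nsmul_eq_mul,
      ha, Real.exp_add, Real.exp_nat_mul (log n) n, Real.exp_log hn']
    refine mul_le_mul_of_nonneg_right ?_ (exp_pos _).le
    exact_mod_cast Nat.factorial_le_pow n
  have h5 := mul_le_mul_of_nonneg_left hsum (exp_pos (-a)).le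
  rw [← Real.exp_add, neg_add_cancel, Real.exp_zero] at h5
  linarith

/-- **Quasi-Gaussian zone, maxima.**  If `m(n) n⁻² / log n → ∞`, then
`E[max_σ ∑ i, X_{i σ(i)}] = (m(n)/n) (1 + o(1))`. -/
theorem expected_max_quasiGaussian (m : ℕ → ℕ) (hm : ∀ n, 0 < m n)
    (h : Tendsto (fun n : ℕ => ((m n : ℝ) / (n : ℝ) ^ 2) / Real.log n) atTop atTop) :
    Tendsto (fun n : ℕ => ((n : ℝ) / (m n : ℝ)) * EmaxAssign (m n) n) atTop (nhds 1) := by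
  rw [Metric.tendsto_atTop']
  intro ε hε
  set t : ℝ := min (ε / 4) 1 with htdef
  have ht : 0 < t := by positivity
  have ht1 : t ≤ 1 := min_le_right _ _
  have ht2 : t ≤ ε / 4 := min_le_left _ _
  obtain ⟨N, hN⟩ := eventually_atTop.1 (h.eventually_ge_atTop (4 / (ε * t)))
  refine ⟨max N 1, fun n hn => ?_⟩
  have hn1 : 1 < n := (le_max_right _ _).trans_lt hn
  have hN' := hN n ((le_max_left _ _).trans hn.le)
  have hnpos : (0 : ℝ) < n := by exact_mod_cast (by omega : 0 < n)
  have hmpos : (0 : ℝ) < m n := by exact_mod_cast hm n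
  have hlog : 0 < Real.log n := Real.log_pos (by exact_mod_cast hn1)
  have hl := aux_lower (m n) n (by omega)
  have hu := aux_upper (m n) n (by omega) t ht
  have hc : 0 < (n : ℝ) / m n := by positivity
  have hl' : 1 ≤ (n : ℝ) / m n * EmaxAssign (m n) n := by
    have := mul_le_mul_of_nonneg_left hl hc.le
    have e : (n : ℝ) / m n * (m n / n) = 1 := by field_simp
    linarith
  have hexp : exp t - 1 ≤ t + t ^ 2 := by
    have := Real.abs_exp_sub_one_sub_id_le (x := t) (by rw [abs_of_pos ht]; exact ht1)
    have := le_of_abs_le this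
    linarith
  have hu2 : t * ((n : ℝ) / m n * EmaxAssign (m n) n) ≤
      (n : ℝ) ^ 2 * Real.log n / m n + (exp t - 1) := by
    have := mul_le_mul_of_nonneg_left hu hc.le
    have e : (n : ℝ) / m n * (n * Real.log n + m n * ((exp t - 1) / n))
      = (n : ℝ) ^ 2 * Real.log n / m n + (exp t - 1) := by field_simp
    linarith
  have hh : (n : ℝ) ^ 2 * Real.log n / m n ≤ ε * t / 4 := by
    have := inv_anti₀ (by positivity) hN'
    have e : (((m n : ℝ) / (n : ℝ) ^ 2) / Real.log n)⁻¹ = (n : ℝ) ^ 2 * Real.log n / m n := by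
      field_simp
    rw [e, inv_div] at this
    exact this
  have hfin : (n : ℝ) / m n * EmaxAssign (m n) n ≤ 1 + ε / 4 + t := by
    refine le_of_mul_le_mul_left ?_ ht
    nlinarith
  rw [Real.dist_eq, abs_of_nonneg (by linarith)]
  linarith

end
end

section
/- In the multinomial assignment setting, let c > 1 and suppose m(n)·n^{-2}/log n → c as n → ∞. Let H̃* = H̃*(c) be the unique real number H with 0 < H < 1 satisfying H log H − (H − 1) = 1/c. Then E[min_{σ ∈ S_n} Σ_{i=1}^n X_{iσ(i)}] = c·H̃*·n·log n·(1+o(1)); that is, E[min_σ Σ_i X_{iσ(i)}]/(c·H̃*·n·log n) → 1 as n → ∞. -/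
open MeasureTheory Filter Real

noncomputable section

/-- `min_{σ ∈ S_n} S(σ)`. -/
def minAssign {m n : ℕ} (ω : Fin m → Fin n × Fin n) : ℝ :=
  ⨅ σ : Equiv.Perm (Fin n), assignSum σ ω

/-- `E[min_{σ ∈ S_n} S(σ)]`. -/
def EminAssign (m n : ℕ) : ℝ :=
  ∫ ω, minAssign ω ∂(gridMeasure m n)

lemma gridMeasure_real_singleton (m n : ℕ) (hn : 0 < n) (ω : Fin m → Fin n × Fin n) :
    (gridMeasure m n).real {ω} = (((n : ℝ) ^ 2) ^ m)⁻¹ := by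
  have hn' : (n : ENNReal) ^ 2 ≠ 0 := by positivity
  have : IsFiniteMeasure (cellMeasure n) := by
    refine ⟨?_⟩
    simp only [cellMeasure, Measure.smul_apply, smul_eq_mul]
    exact ENNReal.mul_lt_top (ENNReal.inv_lt_top.2 (by positivity)) (by
      simp [Measure.count_apply_finite]
      exact ENNReal.mul_lt_top (ENNReal.natCast_lt_top n) (ENNReal.natCast_lt_top n))
  rw [Measure.real, gridMeasure, Measure.pi_singleton]
  simp [cellMeasure]

lemma Emin_eq (m n : ℕ) (hn : 0 < n) :
    EminAssign m n = (((n : ℝ) ^ 2) ^ m)⁻¹ * ∑ ω : Fin m → Fin n × Fin n, minAssign ω := by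
  have : IsFiniteMeasure (cellMeasure n) := by
    refine ⟨?_⟩
    simp only [cellMeasure, Measure.smul_apply, smul_eq_mul]
    exact ENNReal.mul_lt_top (ENNReal.inv_lt_top.2 (by positivity)) (by
      simp [Measure.count_apply_finite]
      exact ENNReal.mul_lt_top (ENNReal.natCast_lt_top n) (ENNReal.natCast_lt_top n))
  have : IsFiniteMeasure (gridMeasure m n) := by unfold gridMeasure; infer_instance
  rw [EminAssign, integral_fintype Integrable.of_finite, Finset.mul_sum]
  simp [gridMeasure_real_singleton m n hn]

lemma assignSum_eq {m n : ℕ} (σ : Equiv.Perm (Fin n)) (ω : Fin m → Fin n × Fin n) :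
    assignSum σ ω = ∑ k, if (ω k).2 = σ (ω k).1 then (1 : ℝ) else 0 := by
  simp only [assignSum, cellCount, Finset.card_filter, Nat.cast_sum]
  rw [Finset.sum_comm]
  refine Finset.sum_congr rfl fun k _ => ?_
  rw [Finset.sum_eq_single (ω k).1]
  · simp [Prod.ext_iff]
  · intro b _ hb
    simp [Prod.ext_iff, Ne.symm hb]
  · simp

lemma minAssign_le {m n : ℕ} (σ : Equiv.Perm (Fin n)) (ω : Fin m → Fin n × Fin n) :
    minAssign ω ≤ assignSum σ ω := ciInf_le (Set.finite_range _).bddBelow σ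

lemma minAssign_le_m {m n : ℕ} (ω : Fin m → Fin n × Fin n) :
    minAssign ω ≤ m := by
  refine (minAssign_le 1 ω).trans ?_
  rw [assignSum_eq]
  refine (Finset.sum_le_sum (g := fun _ => (1:ℝ)) fun k _ => ?_).trans (by simp)
  split_ifs <;> norm_num

lemma exists_minAssign {m n : ℕ} (ω : Fin m → Fin n × Fin n) :
    ∃ σ, minAssign ω = assignSum σ ω := by
  obtain ⟨σ, hσ⟩ := exists_eq_ciInf_of_finite (f := fun σ : Equiv.Perm (Fin n) => assignSum σ ω)
  exact ⟨σ, hσ.symm⟩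

/-- moment generating function -/
lemma sum_exp {m n : ℕ} (σ : Equiv.Perm (Fin n)) (θ : ℝ) :
    ∑ ω : Fin m → Fin n × Fin n, exp (-θ * assignSum σ ω) =
      ((n : ℝ) ^ 2 - n + n * exp (-θ)) ^ m := by
  have h1 : ∀ ω : Fin m → Fin n × Fin n, exp (-θ * assignSum σ ω) =
      ∏ k, exp (-θ * if (ω k).2 = σ (ω k).1 then (1 : ℝ) else 0) := by
    intro ω
    rw [← Real.exp_sum, assignSum_eq, Finset.mul_sum]
  simp_rw [h1]
  rw [← Fintype.piFinset_univ, ← Finset.prod_univ_sum (fun _ => Finset.univ)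
    (fun (_ : Fin m) (x : Fin n × Fin n) => exp (-θ * if x.2 = σ x.1 then (1 : ℝ) else 0))]
  rw [Finset.prod_const, Finset.card_univ, Fintype.card_fin]
  congr 1
  rw [Fintype.sum_prod_type]
  have h2 : ∀ i : Fin n, ∑ j : Fin n, exp (-θ * if j = σ i then (1 : ℝ) else 0)
      = n - 1 + exp (-θ) := by
    intro i
    have : ∀ j : Fin n, exp (-θ * if j = σ i then (1 : ℝ) else 0) =
        1 + if j = σ i then exp (-θ) - 1 else 0 := by
      intro j; split_ifs <;> simp
    simp_rw [this, Finset.sum_add_distrib]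
    simp; ring
  simp only [h2]
  simp; ring

lemma lower_bound (m n : ℕ) (hn : 0 < n) (θ : ℝ) (hθ : 0 < θ) :
    ((m : ℝ) / n * (1 - exp (-θ)) - n * log n) / θ ≤ EminAssign m n := by
  set b := ((m : ℝ) / n * (1 - exp (-θ)) - n * log n) / θ with hb
  have hn0 : (0:ℝ) < n := by exact_mod_cast hn
  have h1 : ∀ ω : Fin m → Fin n × Fin n, 1 - θ * (minAssign ω - b) ≤
      exp (θ * b) * ∑ σ : Equiv.Perm (Fin n), exp (-θ * assignSum σ ω) := by
    intro ω
    obtain ⟨σ, hσ⟩ := exists_minAssign ω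
    have h2 := Real.add_one_le_exp (-θ * (minAssign ω - b))
    have h3 : exp (-θ * assignSum σ ω) ≤ ∑ σ : Equiv.Perm (Fin n), exp (-θ * assignSum σ ω) :=
      Finset.single_le_sum (f := fun σ : Equiv.Perm (Fin n) => exp (-θ * assignSum σ ω))
        (fun _ _ => (exp_pos _).le) (Finset.mem_univ σ)
    have h4 : exp (-θ * (minAssign ω - b)) = exp (θ * b) * exp (-θ * assignSum σ ω) := by
      rw [← exp_add, hσ]; congr 1; ring
    have := mul_le_mul_of_nonneg_left h3 (exp_pos (θ * b)).le
    linarith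
  have h5 := Finset.sum_le_sum fun ω (_ : ω ∈ Finset.univ) => h1 ω
  rw [← Finset.mul_sum, Finset.sum_comm] at h5
  simp_rw [sum_exp] at h5
  rw [Finset.sum_const, Finset.card_univ, Fintype.card_perm, Fintype.card_fin, nsmul_eq_mul] at h5
  have hN : (0:ℝ) < ((n:ℝ)^2)^m := by positivity
  have h6 : ∑ ω : Fin m → Fin n × Fin n, (1 - θ * (minAssign ω - b)) =
      ((n:ℝ)^2)^m * (1 + θ * b - θ * EminAssign m n) := by
    rw [Emin_eq m n hn]
    simp only [mul_sub, Finset.sum_sub_distrib, ← Finset.mul_sum]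
    simp only [Finset.sum_const, Finset.card_univ, Fintype.card_fun, Fintype.card_prod, Fintype.card_fin]
    simp only [nsmul_eq_mul]
    push_cast
    field_simp
    ring
  rw [h6] at h5
  have h7 : ((n : ℝ) ^ 2 - n + n * exp (-θ)) ^ m ≤ ((n:ℝ)^2)^m * exp (-((m:ℝ) / n * (1 - exp (-θ)))) := by
    have : exp (-((m:ℝ) / n * (1 - exp (-θ)))) = exp (-(1 - exp (-θ))/n) ^ m := by
      rw [← exp_nat_mul]; congr 1; ring
    rw [this, ← mul_pow]
    have h8 := Real.add_one_le_exp (-(1 - exp (-θ))/n)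
    have h9 : (n : ℝ) ^ 2 - n + n * exp (-θ) = (n:ℝ)^2 * (-(1 - exp (-θ))/n + 1) := by
      field_simp; ring
    apply pow_le_pow_left₀
    · have : (1:ℝ) ≤ n := by exact_mod_cast hn
      have := exp_pos (-θ)
      nlinarith [mul_pos hn0 this]
    · rw [h9]; gcongr
  have h10 : (n.factorial : ℝ) ≤ exp (n * log n) := by
    rw [exp_nat_mul, exp_log hn0]
    exact_mod_cast Nat.factorial_le_pow n
  have h11 : exp (θ * b) = exp ((m : ℝ) / n * (1 - exp (-θ))) * exp (- (n * log n)) := by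
    rw [← exp_add]; congr 1; rw [hb]; field_simp; ring
  have h12 : exp (θ * b) * (n.factorial * ((n : ℝ) ^ 2 - n + n * exp (-θ)) ^ m) ≤ ((n:ℝ)^2)^m := by
    calc _ ≤ exp (θ * b) * (exp (n * log n) * (((n:ℝ)^2)^m * exp (-((m:ℝ) / n * (1 - exp (-θ)))))) := by
          have h0 : (0:ℝ) ≤ (n : ℝ) ^ 2 - n + n * exp (-θ) := by
            have h1n : (1:ℝ) ≤ n := by exact_mod_cast hn
            have h2n := exp_pos (-θ)
            nlinarith [mul_pos hn0 h2n]
          gcongr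
      _ = _ := by
          rw [h11]
          simp only [exp_neg]
          field_simp
  have h13 := h5.trans h12
  have h14 : 1 + θ * b - θ * EminAssign m n ≤ 1 := by
    by_contra hcon
    push Not at hcon
    nlinarith
  by_contra hcon
  push Not at hcon
  nlinarith

lemma factorial_upper (m : ℕ) (hm : 0 < m) :
    (m.factorial : ℝ) ≤ exp 1 * m * ((m : ℝ) / exp 1) ^ m := by
  obtain ⟨k, rfl⟩ : ∃ k, m = k + 1 := ⟨m - 1, by omega⟩
  have h := Stirling.stirlingSeq'_antitone (Nat.zero_le k)
  simp only [Function.comp, Nat.succ_eq_add_one, zero_add, Stirling.stirlingSeq_one] at h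
  rw [Stirling.stirlingSeq] at h
  have h1 : (1:ℝ) ≤ (k + 1 : ℕ) := by exact_mod_cast Nat.succ_le_succ (Nat.zero_le k)
  generalize hx : ((k + 1 : ℕ) : ℝ) = x at *
  have hs : √(2 * x) = √2 * √x := Real.sqrt_mul (by norm_num) x
  rw [div_le_div_iff₀ (by positivity) (by positivity), hs] at h
  have hsx : √x ≤ x := by
    rw [Real.sqrt_le_left (by linarith)]; nlinarith
  have h2 : (0:ℝ) < √2 := by positivity
  have h3 : ((k+1).factorial : ℝ) ≤ exp 1 * √x * (x / exp 1) ^ (k+1) := by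
    refine le_of_mul_le_mul_right ?_ h2
    calc _ ≤ _ := h
      _ = _ := by ring
  refine h3.trans ?_
  gcongr

/-- number of functions with prescribed counts -/
lemma fiber_card {K : Type*} [Fintype K] [DecidableEq K] (m : ℕ) (x : K → ℕ) 
    (hx : ∑ c, x c = m) :
    (Finset.univ.filter fun ω : Fin m → K => 
      (fun c => (Finset.univ.filter fun k => ω k = c).card) = x).card = Nat.multinomial Finset.univ x := by
  have key : (∑ c : K, (MvPolynomial.X c : MvPolynomial K ℕ)) ^ m =
      ∑ ω : Fin m → K, ∏ k, MvPolynomial.X (ω k) := by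
    have := Finset.prod_univ_sum (fun _ : Fin m => (Finset.univ : Finset K))
      (fun _ c => (MvPolynomial.X c : MvPolynomial K ℕ))
    rw [Fintype.piFinset_univ] at this
    rw [← this]; simp
  have h1 : ∀ ω : Fin m → K, ∏ k, (MvPolynomial.X (ω k) : MvPolynomial K ℕ) =
      ∏ c, MvPolynomial.X c ^ (Finset.univ.filter fun k => ω k = c).card := by
    intro ω
    rw [← Finset.prod_fiberwise (Finset.univ) ω]
    refine Finset.prod_congr rfl fun c _ => ?_
    rw [← Finset.prod_const]
    refine Finset.prod_congr rfl fun k hk => ?_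
    simp at hk; rw [hk]
  have h2 : ∀ y : K → ℕ, ∏ c, (MvPolynomial.X c : MvPolynomial K ℕ) ^ (y c) =
      MvPolynomial.monomial (Finsupp.equivFunOnFinite.symm y) 1 := by
    intro y
    rw [MvPolynomial.monomial_eq, Finsupp.prod_fintype _ _ (by simp)]
    simp
  have h3 := congrArg (MvPolynomial.coeff (Finsupp.equivFunOnFinite.symm x)) key
  rw [Finset.sum_pow_eq_sum_piAntidiag] at h3
  simp_rw [h1, h2] at h3
  simp only [MvPolynomial.coeff_sum, ← MvPolynomial.C_eq_coe_nat, MvPolynomial.coeff_C_mul, 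
    MvPolynomial.coeff_monomial, Equiv.apply_eq_iff_eq] at h3
  rw [Finset.card_filter]
  rw [← h3]
  rw [Finset.sum_eq_single x]
  · simp
  · intro b _ hb; simp [hb]
  · intro h; exfalso; apply h; simp [Finset.mem_piAntidiag, hx]

lemma sum_counts {K : Type*} [Fintype K] [DecidableEq K] (m : ℕ) (ω : Fin m → K) :
    ∑ c, (Finset.univ.filter fun k => ω k = c).card = m := by
  have := Finset.card_eq_sum_card_fiberwise (s := (Finset.univ : Finset (Fin m))) (f := ω) (t := Finset.univ) (by simp)
  simpa using this.symm

lemma count_bound {K : Type*} [Fintype K] [DecidableEq K] (m : ℕ) (S : Finset K) (T : ℕ)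
    (hT : T ≤ m) (z : ℝ) (hz : 0 < z) :
    ((Finset.univ.filter fun ω : Fin m → K =>
      ∀ c ∈ S, T < (Finset.univ.filter fun k => ω k = c).card).card : ℝ) * (z ^ m / m.factorial) ≤
    (exp z - z ^ T / T.factorial) ^ S.card * exp z ^ (Fintype.card K - S.card) := by
  classical
  set cnt : (Fin m → K) → (K → ℕ) := fun ω c => (Finset.univ.filter fun k => ω k = c).card with hcnt
  set D : Finset (K → ℕ) := (Finset.piAntidiag Finset.univ m).filter (fun x => ∀ c ∈ S, T < x c) with hD
  have h1 : (Finset.univ.filter fun ω : Fin m → K => ∀ c ∈ S, T < cnt ω c).card =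
      ∑ x ∈ D, Nat.multinomial Finset.univ x := by
    rw [Finset.card_eq_sum_card_fiberwise (f := cnt) (t := D)]
    · refine Finset.sum_congr rfl fun x hx => ?_
      simp only [hD, Finset.mem_filter, Finset.mem_piAntidiag] at hx
      rw [← fiber_card m x hx.1.1, Finset.filter_filter]
      congr 1
      ext ω
      simp only [Finset.mem_filter, Finset.mem_univ, true_and]
      constructor
      · exact fun h => h.2
      · intro h
        refine ⟨?_, h⟩
        have : cnt ω = x := h
        rw [this]; exact hx.2
    · intro ω hω
      simp only [Finset.coe_filter, Finset.mem_univ, true_and, Set.mem_ofPred_eq] at hω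
      simp only [hD, Finset.coe_filter, Set.mem_ofPred_eq, Finset.mem_piAntidiag]
      exact ⟨⟨sum_counts m ω, by simp⟩, hω⟩
  rw [h1]
  push_cast
  rw [Finset.sum_mul]
  set g : K → ℕ → ℝ := fun c k => if c ∈ S ∧ k ≤ T then 0 else z ^ k / k.factorial with hg
  have hg0 : ∀ c k, 0 ≤ g c k := by
    intro c k; simp only [hg]; split_ifs <;> positivity
  have h2 : ∀ x ∈ D, (Nat.multinomial Finset.univ x : ℝ) * (z ^ m / m.factorial) = ∏ c, g c (x c) := by
    intro x hx
    simp only [hD, Finset.mem_filter, Finset.mem_piAntidiag] at hx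
    have h3 : ∀ c, g c (x c) = z ^ (x c) / (x c).factorial := by
      intro c
      simp only [hg]
      rw [if_neg]
      rintro ⟨hc, hc'⟩
      have := hx.2 c hc
      omega
    simp_rw [h3, Finset.prod_div_distrib]
    rw [Finset.prod_pow_eq_pow_sum, hx.1.1]
    have h4 := Nat.multinomial_spec Finset.univ x
    rw [hx.1.1] at h4
    have h5 : (m.factorial : ℝ) = (∏ c, ((x c).factorial : ℝ)) * Nat.multinomial Finset.univ x := by
      rw [← h4]; push_cast; rfl
    have h6 : (0:ℝ) < ∏ c, ((x c).factorial : ℝ) := Finset.prod_pos fun c _ => by positivity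
    have h7 : (Nat.multinomial Finset.univ x : ℝ) ≠ 0 := by
      exact_mod_cast (Nat.multinomial_pos _ _).ne'
    rw [h5]; field_simp
  rw [Finset.sum_congr rfl h2]
  have h8 : D ⊆ Fintype.piFinset (fun _ : K => Finset.range (m+1)) := by
    intro x hx
    simp only [hD, Finset.mem_filter, Finset.mem_piAntidiag] at hx
    simp only [Fintype.mem_piFinset, Finset.mem_range]
    intro c
    have := Finset.single_le_sum (f := x) (fun _ _ => Nat.zero_le _) (Finset.mem_univ c)
    exact Nat.lt_succ_of_le (this.trans_eq hx.1.1)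
  refine (Finset.sum_le_sum_of_subset_of_nonneg h8 fun x _ _ => Finset.prod_nonneg fun c _ => hg0 _ _).trans ?_
  rw [← Finset.prod_univ_sum]
  have h9 : ∀ c, ∑ k ∈ Finset.range (m+1), g c k ≤ if c ∈ S then exp z - z ^ T / T.factorial else exp z := by
    intro c
    have h10 := Real.sum_le_exp_of_nonneg hz.le (m+1)
    split_ifs with hc
    · have h11 : ∀ k ∈ Finset.range (m+1), g c k ≤ z ^ k / k.factorial - if k = T then z ^ T / T.factorial else 0 := by
        intro k _
        simp only [hg, hc, true_and]
        have : 0 ≤ z ^ k / k.factorial := by positivity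
        split_ifs with h1 h2 h2
        · subst h2; simp
        · simpa using this
        · omega
        · simp
      refine (Finset.sum_le_sum h11).trans ?_
      rw [Finset.sum_sub_distrib]
      simp only [Finset.sum_ite_eq', Finset.mem_range]
      rw [if_pos (by omega)]
      linarith
    · simpa [hg, hc] using h10
  refine (Finset.prod_le_prod (fun c _ => Finset.sum_nonneg fun k _ => hg0 _ _) fun c _ => h9 c).trans ?_
  rw [Finset.prod_ite]
  simp only [Finset.prod_const]
  apply le_of_eq
  congr 2
  · congr 1; ext; simp
  · rw [← Finset.card_compl]; congr 1; ext; simp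

/-- the threshold graph has no perfect matching -/
def failSet (m n T : ℕ) : Finset (Fin m → Fin n × Fin n) := by
  classical
  exact Finset.univ.filter fun ω => ¬ ∃ σ : Equiv.Perm (Fin n), ∀ i, cellCount i (σ i) ω ≤ T

lemma minAssign_le_of_not_fail {m n T : ℕ} (ω : Fin m → Fin n × Fin n) (hω : ω ∉ failSet m n T) :
    minAssign ω ≤ n * T := by
  simp only [failSet, Finset.mem_filter, Finset.mem_univ, true_and, not_not] at hω
  obtain ⟨σ, hσ⟩ := hω
  refine (minAssign_le σ ω).trans ?_
  rw [assignSum]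
  refine (Finset.sum_le_sum (g := fun _ => (T:ℝ)) fun i _ => by exact_mod_cast hσ i).trans (by simp)

lemma hall_fail {m n T : ℕ} (ω : Fin m → Fin n × Fin n) (hω : ω ∈ failSet m n T) :
    ∃ A N : Finset (Fin n), N.card < A.card ∧ ∀ c ∈ A ×ˢ Nᶜ, T < cellCount c.1 c.2 ω := by
  classical
  simp only [failSet, Finset.mem_filter, Finset.mem_univ, true_and] at hω
  by_contra hcon
  push Not at hcon
  apply hω
  have := (Fintype.all_card_le_filter_rel_iff_exists_injective
    (fun i j : Fin n => cellCount i j ω ≤ T)).1 ?_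
  · obtain ⟨f, hf, hf'⟩ := this
    exact ⟨Equiv.ofBijective f (Finite.injective_iff_bijective.1 hf), fun i => hf' i⟩
  · intro A
    by_contra hA
    push Not at hA
    obtain ⟨c, hc, hc'⟩ := hcon A _ hA
    simp only [Finset.mem_product, Finset.mem_compl, Finset.mem_filter, Finset.mem_univ, true_and,
      not_exists, not_and] at hc
    exact hc.2 c.1 hc.1 hc'

lemma rect_bound {m n T : ℕ} (hm : 0 < m) (hn : 0 < n) (hT : T ≤ m) (S : Finset (Fin n × Fin n))
    (p : ℝ) (hp : p = exp (-((m:ℝ) / n ^ 2)) * (((m:ℝ) / n ^ 2) ^ T / T.factorial)) :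
    ((Finset.univ.filter fun ω : Fin m → Fin n × Fin n =>
      ∀ c ∈ S, T < cellCount c.1 c.2 ω).card : ℝ) ≤
      ((n:ℝ)^2)^m * (exp 1 * m) * exp (-(p * S.card)) := by
  have hm0 : (0:ℝ) < m := by exact_mod_cast hm
  have hn0 : (0:ℝ) < n := by exact_mod_cast hn
  set z : ℝ := (m:ℝ) / n ^ 2 with hz
  have hz0 : 0 < z := by positivity
  have h1 := count_bound (K := Fin n × Fin n) m S T hT z hz0
  simp only [cellCount]
  set N : ℝ := ((Finset.univ.filter fun ω : Fin m → Fin n × Fin n =>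
      ∀ c ∈ S, T < (Finset.univ.filter fun k => ω k = c).card).card : ℝ) with hN
  change N ≤ _
  have hcard : S.card ≤ n * n := by
    simpa using Finset.card_le_univ S
  simp only [Fintype.card_prod, Fintype.card_fin] at h1
  have h2 : exp z - z ^ T / T.factorial = exp z * (1 - p) := by
    rw [hp, mul_sub, ← mul_assoc, ← exp_add]; simp
  have hp1 : 0 ≤ 1 - p := by
    have h3 : 0 ≤ exp z - z ^ T / T.factorial := by
      have := Real.sum_le_exp_of_nonneg hz0.le (T+1)
      have h4 := Finset.single_le_sum (f := fun i : ℕ => z ^ i / (i.factorial : ℝ)) (s := Finset.range (T+1))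
        (fun i _ => by positivity) (Finset.mem_range.2 (Nat.lt_succ_self T))
      linarith
    rw [h2] at h3
    exact nonneg_of_mul_nonneg_right h3 (exp_pos z)
  have h5 : (1 - p) ^ S.card ≤ exp (-(p * S.card)) := by
    have : exp (-(p * S.card)) = exp (-p) ^ S.card := by rw [← exp_nat_mul]; congr 1; ring
    rw [this]
    exact pow_le_pow_left₀ hp1 (Real.one_sub_le_exp_neg p) _
  have h6 : N * (z ^ m / m.factorial) ≤ exp m * exp (-(p * S.card)) := by
    refine h1.trans ?_
    rw [h2, mul_pow, mul_right_comm, ← pow_add, Nat.add_sub_cancel' hcard, ← exp_nat_mul]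
    have : ((n * n : ℕ) : ℝ) * z = m := by rw [hz]; push_cast; field_simp
    rw [this]; gcongr
  have hf : (0:ℝ) < m.factorial := by positivity
  have h7 := factorial_upper m hm
  have h8 : N * z ^ m ≤ exp m * exp (-(p * S.card)) * m.factorial := by
    rw [← mul_div_assoc, div_le_iff₀ hf] at h6; exact h6
  have h9 : N * z ^ m ≤ (((n:ℝ)^2)^m * (exp 1 * m) * exp (-(p * S.card))) * z ^ m := by
    refine h8.trans ?_
    calc _ ≤ exp m * exp (-(p * S.card)) * (exp 1 * m * ((m : ℝ) / exp 1) ^ m) := by gcongr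
      _ = _ := by
        have : exp (m:ℝ) = exp 1 ^ m := by rw [← exp_nat_mul]; simp
        rw [this, hz, div_pow, div_pow]
        field_simp
  exact le_of_mul_le_mul_right h9 (by positivity)

lemma expo_bound {n a ν : ℕ} (ha : a ≤ n) (hν : ν < a) (p w : ℝ) (hp : 0 ≤ p)
    (hw : w = exp (-(p * n / 8))) :
    exp (-(p * (a * (n - ν : ℕ) : ℕ))) ≤ w * (w ^ a * w ^ ν + w ^ (n - a) * w ^ (n - ν)) := by
  have hw0 : 0 < w := hw ▸ exp_pos _
  have key : ∀ k : ℕ, (k + 1) * n ≤ 8 * (a * (n - ν)) → exp (-(p * (a * (n - ν : ℕ) : ℕ))) ≤ w * w ^ k := by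
    intro k hk
    rw [← pow_succ', hw, ← exp_nat_mul]
    apply exp_le_exp.2
    have : (((k + 1) * n : ℕ) : ℝ) ≤ ((8 * (a * (n - ν)) : ℕ) : ℝ) := by exact_mod_cast hk
    generalize a * (n - ν) = s at *
    push_cast at *
    nlinarith
  obtain ⟨b, hb⟩ : ∃ b, n = ν + b := ⟨n - ν, by omega⟩
  have hb' : n - ν = b := by omega
  rw [hb'] at key ⊢
  rcases le_or_gt (2 * a) n with h | h
  · have := key (a + ν) (by
      calc (a + ν + 1) * n ≤ (2 * a) * (2 * b) := Nat.mul_le_mul (by omega) (by omega)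
        _ ≤ 8 * (a * b) := by nlinarith [Nat.zero_le (a * b)])
    refine this.trans ?_
    rw [pow_add]
    gcongr
    have : 0 ≤ w ^ (n - a) * w ^ b := by positivity
    linarith
  · have := key ((n - a) + b) (by
      have : n - a < b := by omega
      calc (n - a + b + 1) * n ≤ (2 * b) * (2 * a) := Nat.mul_le_mul (by omega) (by omega)
        _ ≤ 8 * (a * b) := by nlinarith [Nat.zero_le (a * b)])
    refine this.trans ?_
    rw [pow_add]
    gcongr
    have : 0 ≤ w ^ a * w ^ ν := by positivity
    linarith

lemma fail_card {m n T : ℕ} (hm : 0 < m) (hn : 0 < n) (hT : T ≤ m)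
    (p w : ℝ) (hp : p = exp (-((m:ℝ) / n ^ 2)) * (((m:ℝ) / n ^ 2) ^ T / T.factorial))
    (hw : w = exp (-(p * n / 8))) :
    ((failSet m n T).card : ℝ) ≤ ((n:ℝ)^2)^m * (exp 1 * m) * (w * (2 * ((1 + w)^n * (1 + w)^n))) := by
  classical
  have hp0 : 0 ≤ p := by rw [hp]; positivity
  have hw0 : 0 < w := hw ▸ exp_pos _
  set P : Finset (Finset (Fin n) × Finset (Fin n)) :=
    Finset.univ.filter fun q => q.2.card < q.1.card with hP
  have h1 : failSet m n T ⊆ P.biUnion fun q => Finset.univ.filter fun ω : Fin m → Fin n × Fin n =>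
      ∀ c ∈ q.1 ×ˢ q.2ᶜ, T < cellCount c.1 c.2 ω := by
    intro ω hω
    obtain ⟨A, N, hAN, h⟩ := hall_fail ω hω
    simp only [Finset.mem_biUnion]
    exact ⟨(A, N), by simp [hP, hAN], by simpa using h⟩
  have h2 : ((failSet m n T).card : ℝ) ≤ ∑ q ∈ P, ((Finset.univ.filter fun ω : Fin m → Fin n × Fin n =>
      ∀ c ∈ q.1 ×ˢ q.2ᶜ, T < cellCount c.1 c.2 ω).card : ℝ) := by
    exact_mod_cast (Finset.card_le_card h1).trans Finset.card_biUnion_le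
  refine h2.trans ?_
  have h3 : ∀ q ∈ P, ((Finset.univ.filter fun ω : Fin m → Fin n × Fin n =>
      ∀ c ∈ q.1 ×ˢ q.2ᶜ, T < cellCount c.1 c.2 ω).card : ℝ) ≤ ((n:ℝ)^2)^m * (exp 1 * m) *
      (w * (w ^ q.1.card * w ^ q.2.card + w ^ (n - q.1.card) * w ^ (n - q.2.card))) := by
    intro q hq
    have hq' : q.2.card < q.1.card := by simpa [hP] using hq
    refine (rect_bound hm hn hT _ p hp).trans ?_
    have : (q.1 ×ˢ q.2ᶜ).card = q.1.card * (n - q.2.card) := by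
      simp [Finset.card_product, Finset.card_compl]
    rw [this]
    have hh := expo_bound (n := n) (by simpa using Finset.card_le_univ q.1) hq' p w hp0 hw
    gcongr
  refine (Finset.sum_le_sum h3).trans ?_
  refine (Finset.sum_le_sum_of_subset_of_nonneg (Finset.subset_univ P) fun q _ _ => by positivity).trans ?_
  rw [← Finset.mul_sum, ← Finset.mul_sum, Finset.sum_add_distrib]
  have e1 : ∑ A : Finset (Fin n), w ^ A.card = (1 + w) ^ n := by
    have := Finset.sum_pow_mul_eq_add_pow w 1 (Finset.univ : Finset (Fin n))
    simpa [add_comm] using this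
  have e2 : ∑ A : Finset (Fin n), w ^ (n - A.card) = (1 + w) ^ n := by
    have := Finset.sum_pow_mul_eq_add_pow 1 w (Finset.univ : Finset (Fin n))
    simpa [add_comm] using this
  rw [Fintype.sum_prod_type, Fintype.sum_prod_type]
  simp only [← Finset.mul_sum, ← Finset.sum_mul, e1, e2]
  apply le_of_eq
  ring

lemma upper_bound {m n T : ℕ} (hm : 0 < m) (hn : 0 < n) (hT : T ≤ m)
    (p w : ℝ) (hp : p = exp (-((m:ℝ) / n ^ 2)) * (((m:ℝ) / n ^ 2) ^ T / T.factorial))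
    (hw : w = exp (-(p * n / 8))) :
    EminAssign m n ≤ n * T + m * ((exp 1 * m) * (w * (2 * ((1 + w)^n * (1 + w)^n)))) := by
  classical
  have hn0 : (0:ℝ) < n := by exact_mod_cast hn
  rw [Emin_eq m n hn]
  have h1 : ∀ ω : Fin m → Fin n × Fin n, minAssign ω ≤ n * T + if ω ∈ failSet m n T then (m:ℝ) else 0 := by
    intro ω
    split_ifs with h
    · have := minAssign_le_m ω
      have : (0:ℝ) ≤ n * T := by positivity
      linarith
    · simpa using minAssign_le_of_not_fail ω h
  have h2 := Finset.sum_le_sum fun ω (_ : ω ∈ Finset.univ) => h1 ω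
  rw [Finset.sum_add_distrib, Finset.sum_ite_mem] at h2
  simp only [Finset.univ_inter, Finset.sum_const, Finset.card_univ, Fintype.card_fun, Fintype.card_prod, Fintype.card_fin,
    nsmul_eq_mul] at h2
  push_cast at h2
  have h3 := fail_card hm hn hT p w hp hw
  have hN : (0:ℝ) < ((n:ℝ)^2)^m := by positivity
  rw [inv_mul_le_iff₀ hN]
  have h4 := mul_le_mul_of_nonneg_right h3 (Nat.cast_nonneg (α := ℝ) m)
  refine h2.trans ?_
  have : ((n:ℝ) * n) ^ m = ((n:ℝ)^2)^m := by rw [sq]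
  rw [this]
  linarith

lemma kappa_lt (c H h : ℝ) (hc : 1 < c) (hH0 : 0 < H) (hHh : H < h) (hh : h < 1)
    (hHeq : H * log H - (H - 1) = 1 / c) : 0 < -c + h * c * log (1 / h) + h * c + 1 := by
  have hh0 : 0 < h := hH0.trans hHh
  have h1 : 1 - (H / h)⁻¹ ≤ log (H / h) := Real.one_sub_inv_le_log_of_pos (by positivity)
  have h2 : H - h ≤ H * (log H - log h) := by
    rw [← Real.log_div hH0.ne' hh0.ne']
    calc H - h = H * (1 - (H / h)⁻¹) := by field_simp
      _ ≤ _ := by gcongr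
  have h3 : log h < 0 := Real.log_neg hh0 hh
  have h4 : h * log h - h + 1 < 1 / c := by
    rw [← hHeq]
    nlinarith
  have h5 : c * (h * log h - h + 1) < 1 := by
    have := mul_lt_mul_of_pos_left h4 (by linarith : 0 < c)
    rwa [mul_one_div_cancel (by linarith)] at this
  rw [one_div, Real.log_inv]
  nlinarith

lemma log_p_lower (z L : ℝ) (T : ℕ) (hT : 0 < T) (hz : 0 < z) (hL : 0 < L) :
    L * (-(z / L) + (T / L) * log ((z / L) / (T / L)) + T / L - (1 + (log (T / L) + log L)) / L) ≤
      log (exp (-z) * (z ^ T / T.factorial)) := by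
  have hT0 : (0:ℝ) < T := by exact_mod_cast hT
  have h1 := factorial_upper T hT
  have h2 : log (T.factorial : ℝ) ≤ 1 + log T + T * (log T - 1) := by
    refine (Real.log_le_log (by positivity) h1).trans ?_
    rw [Real.log_mul (by positivity) (by positivity), Real.log_mul (by positivity) (by positivity),
      Real.log_pow, Real.log_div (by positivity) (by positivity), Real.log_exp]
  have e1 : log (exp (-z) * (z ^ T / T.factorial)) = -z + (T * log z - log (T.factorial : ℝ)) := by
    rw [Real.log_mul (by positivity) (by positivity), Real.log_div (by positivity) (by positivity),
      Real.log_exp, Real.log_pow]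
  have e2 : log ((z / L) / (T / L)) = log z - log L - (log T - log L) := by
    rw [Real.log_div (by positivity) (by positivity), Real.log_div (by positivity) (by positivity),
      Real.log_div (by positivity) (by positivity)]
  have e3 : log (T / L) = log T - log L := Real.log_div (by positivity) (by positivity)
  rw [e1, e2, e3]
  have : L * (-(z / L) + (T / L) * (log z - log L - (log T - log L)) + T / L - (1 + (log T - log L + log L)) / L)
    = -z + T * (log z - log T) + T - (1 + log T) := by
    field_simp
    ring
  rw [this]
  linarith

lemma upper_asymp (m : ℕ → ℕ) (hm : ∀ n, 0 < m n) (c : ℝ) (hc : 1 < c)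
    (h : Tendsto (fun n : ℕ => ((m n : ℝ) / (n : ℝ) ^ 2) / Real.log n) atTop (nhds c))
    (H : ℝ) (hH0 : 0 < H) (hHeq : H * Real.log H - (H - 1) = 1 / c) (η : ℝ) (hη : H < η) (hη1 : η < 1) :
    ∀ᶠ n : ℕ in atTop, EminAssign (m n) n ≤ n * (⌊η * c * log n⌋₊ : ℝ) + 1 := by
  have hη0 : 0 < η := hH0.trans hη
  have hLt : Tendsto (fun n : ℕ => log (n:ℝ)) atTop atTop :=
    Real.tendsto_log_atTop.comp tendsto_natCast_atTop_atTop
  have hτ : Tendsto (fun n : ℕ => (⌊η * c * log n⌋₊ : ℝ) / log n) atTop (nhds (η * c)) :=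
    (tendsto_nat_floor_mul_div_atTop (by positivity)).comp hLt
  have hηc : 0 < η * c := by positivity
  have hloglog : Tendsto (fun n : ℕ => log (log (n:ℝ)) / log n) atTop (nhds 0) :=
    (Real.isLittleO_log_id_atTop.tendsto_div_nhds_zero).comp hLt
  have hinv : Tendsto (fun n : ℕ => (log (n:ℝ))⁻¹) atTop (nhds 0) := tendsto_inv_atTop_zero.comp hLt
  have herr : Tendsto (fun n : ℕ => (1 + (log ((⌊η * c * log n⌋₊ : ℝ) / log n) + log (log (n:ℝ)))) / log n)
      atTop (nhds 0) := by
    have h1 : Tendsto (fun n : ℕ => (1 + log ((⌊η * c * log n⌋₊ : ℝ) / log n)) * (log (n:ℝ))⁻¹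
        + log (log (n:ℝ)) / log n) atTop (nhds ((1 + log (η * c)) * 0 + 0)) :=
      ((tendsto_const_nhds.add (hτ.log hηc.ne')).mul hinv).add hloglog
    simp only [mul_zero, add_zero] at h1
    refine h1.congr fun n => ?_
    ring
  have hmain : Tendsto (fun n : ℕ => -(((m n : ℝ) / (n : ℝ) ^ 2) / Real.log n)
      + ((⌊η * c * log n⌋₊ : ℝ) / log n) * log ((((m n : ℝ) / (n : ℝ) ^ 2) / Real.log n) / ((⌊η * c * log n⌋₊ : ℝ) / log n))
      + (⌊η * c * log n⌋₊ : ℝ) / log n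
      - (1 + (log ((⌊η * c * log n⌋₊ : ℝ) / log n) + log (log (n:ℝ)))) / log n) atTop
      (nhds (-c + (η * c) * log (c / (η * c)) + η * c - 0)) :=
    (((h.neg).add (hτ.mul ((h.div hτ hηc.ne').log (by positivity)))).add hτ).sub herr
  have hk := kappa_lt c H η hc hH0 hη hη1 hHeq
  have he : c / (η * c) = 1 / η := by field_simp
  rw [he, sub_zero] at hmain
  set d := -c + η * c * log (1 / η) + η * c + 1 with hd
  have hlow := hmain.eventually (lt_mem_nhds (show d / 2 - 1 < -c + η * c * log (1 / η) + η * c by linarith))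
  -- growth
  have hgrow : ∀ᶠ n : ℕ in atTop, 7 * log (n:ℝ) ≤ exp (d / 2 * log n) / 8 := by
    have h1 : ∀ᶠ x : ℝ in atTop, 56 * x ≤ exp (d / 2 * x) := by
      have h2 := (isLittleO_pow_exp_pos_mul_atTop 1 (show 0 < d / 2 by linarith)).def
        (show (0:ℝ) < 1 / 56 by norm_num)
      filter_upwards [h2, eventually_gt_atTop 0] with x hx hx0
      rw [Real.norm_of_nonneg (by positivity), Real.norm_of_nonneg (exp_pos _).le] at hx
      linarith
    filter_upwards [hLt.eventually h1] with n hn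
    linarith
  have hCup := h.eventually (gt_mem_nhds (show c < 2 * c by linarith))
  have hClow := h.eventually (lt_mem_nhds (show η * c < c by nlinarith))
  have hτpos := hτ.eventually (lt_mem_nhds hηc)
  have hlogn : ∀ᶠ n : ℕ in atTop, 2 * c * log (n:ℝ) ≤ n := by
    have h2 := (Real.isLittleO_log_id_atTop.comp_tendsto tendsto_natCast_atTop_atTop).def
      (show (0:ℝ) < 1 / (2 * c) by positivity)
    filter_upwards [h2, hLt.eventually_gt_atTop 0] with n hn hn0
    simp only [Function.comp, id] at hn
    rw [Real.norm_of_nonneg hn0.le, Real.norm_of_nonneg (Nat.cast_nonneg n)] at hn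
    calc 2 * c * log (n:ℝ) ≤ 2 * c * (1 / (2 * c) * n) := by gcongr
      _ = n := by field_simp
  filter_upwards [hlow, hgrow, hCup, hClow, hτpos, hlogn, hLt.eventually_gt_atTop 0, eventually_ge_atTop 54]
    with n hlow hgrow hCup hClow hτpos hlogn hL hn54
  have hn : 0 < n := by omega
  have hn0 : (0:ℝ) < n := by exact_mod_cast hn
  have hn54' : (54:ℝ) ≤ n := by exact_mod_cast hn54
  have hm0 : (0:ℝ) < m n := by exact_mod_cast hm n
  set T := ⌊η * c * log (n:ℝ)⌋₊ with hT
  set L := log (n:ℝ) with hLdef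
  set z : ℝ := (m n : ℝ) / (n:ℝ)^2 with hz
  have hz0 : 0 < z := by positivity
  have hT0 : 0 < T := by
    have : (0:ℝ) < T := by
      rwa [div_pos_iff_of_pos_right hL] at hτpos
    exact_mod_cast this
  have hzlow : η * c * L < z := by rwa [lt_div_iff₀ hL] at hClow
  have hzup : z < 2 * c * L := by rwa [div_lt_iff₀ hL] at hCup
  have hTz : (T:ℝ) ≤ η * c * L := Nat.floor_le (by positivity)
  have hmz : (m n : ℝ) = z * n ^ 2 := by rw [hz]; field_simp
  have hTm : T ≤ m n := by
    have : (T:ℝ) ≤ m n := by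
      rw [hmz]
      have : (1:ℝ) ≤ (n:ℝ)^2 := by nlinarith
      nlinarith
    exact_mod_cast this
  have hmn : (m n : ℝ) ≤ n ^ 3 := by
    rw [hmz]
    calc z * (n:ℝ)^2 ≤ n * (n:ℝ)^2 := by gcongr; linarith
      _ = _ := by ring
  set p := exp (-z) * (z ^ T / T.factorial) with hp
  have hp0 : 0 < p := by positivity
  set w := exp (-(p * n / 8)) with hw
  have hub := upper_bound (hm n) hn hTm p w hp hw
  refine hub.trans ?_
  have hlogp := log_p_lower z L T hT0 hz0 hL
  have hpn : exp (d / 2 * L) ≤ p * n := by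
    rw [← Real.le_log_iff_exp_le (by positivity), Real.log_mul hp0.ne' hn0.ne']
    have := mul_le_mul_of_nonneg_left hlow.le hL.le
    have h3 := this.trans hlogp
    change _ ≤ log p at h3
    change _ ≤ log p + L
    linarith
  have hw7 : w * (n:ℝ) ^ 7 ≤ 1 := by
    have : (n:ℝ)^7 = exp (7 * L) := by
      rw [show (7:ℝ) * L = ((7:ℕ):ℝ) * L by norm_num, exp_nat_mul, hLdef, exp_log hn0]
    rw [this, hw, ← exp_add]
    apply Real.exp_le_one_iff.2
    linarith
  have hw0 : 0 < w := exp_pos _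
  have hnw : n * w ≤ 1 := by
    have : (n:ℝ) ≤ n ^ 7 := le_self_pow₀ (by linarith) (by norm_num)
    nlinarith
  have he3 : exp 1 ≤ 3 := by have := Real.exp_one_lt_d9; linarith
  have h1w : (1 + w) ^ n ≤ 3 := by
    calc (1 + w) ^ n ≤ exp w ^ n := by
          gcongr; have := Real.add_one_le_exp w; linarith
      _ = exp (n * w) := by rw [exp_nat_mul]
      _ ≤ exp 1 := exp_le_exp.2 hnw
      _ ≤ 3 := he3
  have : (m n : ℝ) * ((exp 1 * m n) * (w * (2 * ((1 + w)^n * (1 + w)^n)))) ≤ 1 := by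
    calc _ ≤ (n:ℝ)^3 * ((3 * (n:ℝ)^3) * (w * (2 * (3 * 3)))) := by gcongr
      _ = 54 * (n:ℝ)^6 * w := by ring
      _ ≤ n * (n:ℝ)^6 * w := by gcongr
      _ = w * (n:ℝ)^7 := by ring
      _ ≤ 1 := hw7
  linarith


/-- **Critical zone, minima.**  If `m(n) n⁻² / log n → c > 1` and `H̃* ∈ (0,1)` is the unique
solution of `H log H - (H - 1) = 1/c`, then
`E[min_σ ∑ i, X_{i σ(i)}] = c H̃* n log n (1 + o(1))`. -/
theorem expected_min_critical (m : ℕ → ℕ) (hm : ∀ n, 0 < m n) (c : ℝ) (hc : 1 < c)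
    (h : Tendsto (fun n : ℕ => ((m n : ℝ) / (n : ℝ) ^ 2) / Real.log n) atTop (nhds c))
    (Hstar : ℝ) (hH0 : 0 < Hstar) (hH1 : Hstar < 1)
    (hHeq : Hstar * Real.log Hstar - (Hstar - 1) = 1 / c)
    (hHuniq : ∀ H : ℝ, 0 < H → H < 1 → H * Real.log H - (H - 1) = 1 / c → H = Hstar) :
    Tendsto (fun n : ℕ => EminAssign (m n) n / (c * Hstar * (n : ℝ) * Real.log n))
      atTop (nhds 1) := by
  have hLt : Tendsto (fun n : ℕ => log (n:ℝ)) atTop atTop :=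
    Real.tendsto_log_atTop.comp tendsto_natCast_atTop_atTop
  have hlogH : log Hstar < 0 := Real.log_neg hH0 hH1
  have hc0 : 0 < c := by linarith
  have hpos : ∀ᶠ n : ℕ in atTop, 0 < c * Hstar * (n : ℝ) * Real.log n := by
    filter_upwards [hLt.eventually_gt_atTop 0, eventually_gt_atTop 0] with n h1 h2
    positivity
  rw [tendsto_order]
  constructor
  · intro a ha
    have hlim : Tendsto (fun n : ℕ => ((((m n : ℝ) / (n : ℝ) ^ 2) / Real.log n) * (1 - Hstar) - 1)
        / (-log Hstar * (c * Hstar))) atTop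
        (nhds ((c * (1 - Hstar) - 1) / (-log Hstar * (c * Hstar)))) :=
      ((h.mul_const _).sub_const _).div_const _
    have hval : (c * (1 - Hstar) - 1) / (-log Hstar * (c * Hstar)) = 1 := by
      rw [div_eq_one_iff_eq (by
        have : 0 < -log Hstar * (c * Hstar) := mul_pos (by linarith) (by positivity)
        exact this.ne')]
      have := congrArg (fun x => c * x) hHeq
      simp only [mul_one_div_cancel hc0.ne'] at this
      linarith
    rw [hval] at hlim
    filter_upwards [hlim.eventually (lt_mem_nhds ha), hpos, hLt.eventually_gt_atTop 0,
      eventually_gt_atTop 0] with n h1 h2 h3 h4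
    refine h1.trans_le ?_
    have hn0 : (0:ℝ) < n := by exact_mod_cast h4
    have hb := lower_bound (m n) n h4 (-log Hstar) (by linarith)
    rw [neg_neg, exp_log hH0] at hb
    rw [le_div_iff₀ h2]
    refine le_trans (le_of_eq ?_) hb
    have : -log Hstar ≠ 0 := by linarith
    have hl : log Hstar ≠ 0 := hlogH.ne
    field_simp
  · intro a ha
    obtain ⟨η, hη, hη'⟩ : ∃ η, Hstar < η ∧ η < min 1 (a * Hstar) :=
      exists_between (lt_min hH1 (by nlinarith))
    have hη1 : η < 1 := hη'.trans_le (min_le_left _ _)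
    have hηa : η < a * Hstar := hη'.trans_le (min_le_right _ _)
    have hU := upper_asymp m hm c hc h Hstar hH0 hHeq η hη hη1
    have hbig : ∀ᶠ n : ℕ in atTop, 1 / (c * (a * Hstar - η)) < log (n:ℝ) := hLt.eventually_gt_atTop _
    filter_upwards [hU, hpos, hLt.eventually_gt_atTop 0, eventually_gt_atTop 0, hbig] with n h1 h2 h3 h4 h5
    have hn1 : (1:ℝ) ≤ n := by exact_mod_cast h4
    have hη0 : 0 < η := hH0.trans hη
    rw [div_lt_iff₀ h2]
    have hfl : (⌊η * c * log (n:ℝ)⌋₊ : ℝ) ≤ η * c * log n := Nat.floor_le (by positivity)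
    rw [div_lt_iff₀ (mul_pos hc0 (by linarith))] at h5
    have h6 : (n:ℝ) * (⌊η * c * log (n:ℝ)⌋₊ : ℝ) ≤ n * (η * c * log n) := by gcongr
    have h7 : (1:ℝ) < n * (log n * (c * (a * Hstar - η))) := by nlinarith
    calc _ ≤ _ := h1
      _ < n * (η * c * log n) + n * (log n * (c * (a * Hstar - η))) := by linarith
      _ = _ := by ring

end
end

section
/- In the multinomial assignment setting, write p_n = n^{-2} and suppose m(n)·p_n = c·n^{-a}·(1+o(1)) for some constants c > 0 and a ∈ (0,1) with a ∉ {1/k : k ∈ ℕ}. Then there is a unique positive integer k with 1/(k+1) < a < 1/k, and E[max_{σ ∈ S_n} Σ_{i=1}^n X_{iσ(i)}] = k·n·(1+o(1)); that is, E[max_σ Σ_i X_{iσ(i)}]/(k·n) → 1 as n → ∞. -/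
open MeasureTheory Filter Real

noncomputable section

lemma aux_substoch {n : ℕ} (w X : Fin n → Fin n → ℝ) (hw : ∀ i j, 0 ≤ w i j)
    (hX : ∀ i j, 0 ≤ X i j) (hr : ∀ i, ∑ j, w i j ≤ 1) (hc : ∀ j, ∑ i, w i j ≤ 1) :
    ∑ i, ∑ j, w i j * X i j ≤ ⨆ σ : Equiv.Perm (Fin n), ∑ i, X i (σ i) := by
  obtain ⟨v, hv, hwv⟩ : ∃ v ∈ doublyStochastic ℝ (Fin n), ∀ i j, w i j ≤ v i j := by
    set T := ∑ i, (1 - ∑ j, w i j) with hT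
    have hT' : T = ∑ j, (1 - ∑ i, w i j) := by
      rw [hT]; simp only [Finset.sum_sub_distrib]; rw [Finset.sum_comm]
    have hr' : ∀ i, 0 ≤ 1 - ∑ j, w i j := fun i => by linarith [hr i]
    have hc' : ∀ j, 0 ≤ 1 - ∑ i, w i j := fun i => by linarith [hc i]
    have hT0 : 0 ≤ T := Finset.sum_nonneg fun i _ => hr' i
    rcases hT0.eq_or_lt with h0 | h0
    · refine ⟨fun i j => w i j, mem_doublyStochastic_iff_sum.2 ⟨hw, ?_, ?_⟩, fun _ _ => le_rfl⟩
      · intro i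
        have := (Finset.sum_eq_zero_iff_of_nonneg (fun i _ => hr' i)).1 h0.symm i (Finset.mem_univ i)
        linarith
      · intro j
        have := (Finset.sum_eq_zero_iff_of_nonneg (fun i _ => hc' i)).1 (hT' ▸ h0).symm j (Finset.mem_univ j)
        linarith
    · refine ⟨fun i j => w i j + (1 - ∑ j, w i j) * (1 - ∑ i, w i j) / T,
        mem_doublyStochastic_iff_sum.2 ⟨fun i j => ?_, fun i => ?_, fun j => ?_⟩, fun i j => ?_⟩
      · exact add_nonneg (hw i j) (div_nonneg (mul_nonneg (hr' i) (hc' j)) hT0)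
      · rw [Finset.sum_add_distrib, ← Finset.sum_div, ← Finset.mul_sum, ← hT']
        field_simp; ring
      · rw [Finset.sum_add_distrib, ← Finset.sum_div, ← Finset.sum_mul, ← hT]
        field_simp; ring
      · have := div_nonneg (mul_nonneg (hr' i) (hc' j)) hT0
        simp only; linarith
  obtain ⟨q, hq0, hq1, hq⟩ := exists_eq_sum_perm_of_mem_doublyStochastic hv
  have hv2 : ∀ i j, v i j = ∑ σ : Equiv.Perm (Fin n), q σ * (if σ i = j then 1 else 0) := by
    intro i j
    rw [← hq, Matrix.sum_apply]
    refine Finset.sum_congr rfl fun σ _ => ?_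
    simp [Equiv.Perm.permMatrix, PEquiv.toMatrix_apply, Equiv.toPEquiv_apply, eq_comm]
  have hsup : ∀ σ : Equiv.Perm (Fin n),
      ∑ i, X i (σ i) ≤ ⨆ σ : Equiv.Perm (Fin n), ∑ i, X i (σ i) :=
    fun σ => le_ciSup (f := fun σ : Equiv.Perm (Fin n) => ∑ i, X i (σ i))
      (Set.finite_range _).bddAbove σ
  calc ∑ i, ∑ j, w i j * X i j ≤ ∑ i, ∑ j, v i j * X i j := by
        refine Finset.sum_le_sum fun i _ => Finset.sum_le_sum fun j _ => ?_
        exact mul_le_mul_of_nonneg_right (hwv i j) (hX i j)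
    _ = ∑ σ : Equiv.Perm (Fin n), q σ * ∑ i, X i (σ i) := by
        simp only [hv2, Finset.sum_mul, Finset.mul_sum]
        symm
        rw [Finset.sum_comm]
        refine Finset.sum_congr rfl fun i _ => ?_
        symm
        rw [Finset.sum_comm]
        refine Finset.sum_congr rfl fun σ _ => ?_
        simp
    _ ≤ ∑ σ : Equiv.Perm (Fin n), q σ * ⨆ σ : Equiv.Perm (Fin n), ∑ i, X i (σ i) :=
        Finset.sum_le_sum fun σ _ => mul_le_mul_of_nonneg_left (hsup σ) (hq0 σ)
    _ = _ := by rw [← Finset.sum_mul, hq1, one_mul]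

lemma aux_quad {d δ r : ℝ} (hd : 0 < d) (hδ : 0 < δ) :
    r * max (r - d) 0 / d ^ 2 ≤ δ + (1 + 1 / δ) * ((r - d) ^ 2 / d ^ 2) := by
  rcases le_total r d with h | h
  · rw [max_eq_right (by linarith)]; simp; positivity
  · rw [max_eq_left (by linarith)]
    have e : δ + (1 + 1 / δ) * ((r - d) ^ 2 / d ^ 2) - r * (r - d) / d ^ 2
      = (δ ^ 2 * d ^ 2 + (r - d) ^ 2 - (r - d) * d * δ) / (δ * d ^ 2) := by
      field_simp; ring
    have : 0 ≤ (δ ^ 2 * d ^ 2 + (r - d) ^ 2 - (r - d) * d * δ) / (δ * d ^ 2) := by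
      apply div_nonneg _ (by positivity)
      nlinarith [sq_nonneg (δ * d - (r - d)), sq_nonneg (δ * d), sq_nonneg (r - d)]
    linarith

lemma aux_det {n : ℕ} (k : ℝ) (hk : 0 ≤ k) (X Y : Fin n → Fin n → ℝ) (hX : ∀ i j, 0 ≤ X i j)
    (hY : ∀ i j, 0 ≤ Y i j) (hXY : ∀ i j, Y i j ≠ 0 → k ≤ X i j)
    {d δ : ℝ} (hd : 0 < d) (hδ : 0 < δ) :
    k * ((∑ i, ∑ j, Y i j) / d
      - ∑ i, (δ + (1 + 1 / δ) * ((∑ j, Y i j - d) ^ 2 / d ^ 2))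
      - ∑ j, (δ + (1 + 1 / δ) * ((∑ i, Y i j - d) ^ 2 / d ^ 2)))
      ≤ ⨆ σ : Equiv.Perm (Fin n), ∑ i, X i (σ i) := by
  set R : Fin n → ℝ := fun i => ∑ j, Y i j with hR
  set C : Fin n → ℝ := fun j => ∑ i, Y i j with hC
  set M : Fin n → Fin n → ℝ := fun i j => max d (max (R i) (C j)) with hM
  have hMd : ∀ i j, d ≤ M i j := fun i j => le_max_left _ _
  have hM0 : ∀ i j, 0 < M i j := fun i j => hd.trans_le (hMd i j)
  have hR0 : ∀ i, 0 ≤ R i := fun i => Finset.sum_nonneg fun j _ => hY i j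
  have hC0 : ∀ j, 0 ≤ C j := fun j => Finset.sum_nonneg fun i _ => hY i j
  refine le_trans ?_ (aux_substoch (fun i j => Y i j / M i j) X
    (fun i j => div_nonneg (hY i j) (hM0 i j).le) hX (fun i => ?_) (fun j => ?_))
  · have h1 : ∀ i j, k * (Y i j / d - Y i j * (max (R i - d) 0) / d ^ 2
        - Y i j * (max (C j - d) 0) / d ^ 2) ≤ Y i j / M i j * X i j := by
      intro i j
      have h2 : Y i j / d - Y i j * (max (R i - d) 0) / d ^ 2
        - Y i j * (max (C j - d) 0) / d ^ 2 ≤ Y i j / M i j := by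
        have hMle : M i j ≤ d + max (R i - d) 0 + max (C j - d) 0 := by
          have := le_max_left (R i - d) 0
          have := le_max_right (R i - d) 0
          have := le_max_left (C j - d) 0
          have := le_max_right (C j - d) 0
          refine max_le (by linarith) (max_le (by linarith) (by linarith))
        have h3 : (2 * d - M i j) / d ^ 2 ≤ 1 / M i j := by
          rw [div_le_div_iff₀ (by positivity) (hM0 i j)]
          nlinarith [sq_nonneg (d - M i j)]
        have h4 : (d - max (R i - d) 0 - max (C j - d) 0) / d ^ 2 ≤ (2 * d - M i j) / d ^ 2 := by
          exact div_le_div_of_nonneg_right (by linarith) (by positivity)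
        have h5 := mul_le_mul_of_nonneg_left (h4.trans h3) (hY i j)
        calc _ = Y i j * ((d - max (R i - d) 0 - max (C j - d) 0) / d ^ 2) := by
              field_simp
          _ ≤ _ := h5
          _ = _ := by ring
      by_cases h0 : Y i j = 0
      · simp [h0]
      · calc _ ≤ k * (Y i j / M i j) := mul_le_mul_of_nonneg_left h2 hk
          _ = Y i j / M i j * k := mul_comm _ _
          _ ≤ _ := mul_le_mul_of_nonneg_left (hXY i j h0) (div_nonneg (hY i j) (hM0 i j).le)
    refine le_trans ?_ (Finset.sum_le_sum fun i _ => Finset.sum_le_sum fun j _ => h1 i j)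
    have e : ∑ i, ∑ j, k * (Y i j / d - Y i j * (max (R i - d) 0) / d ^ 2
        - Y i j * (max (C j - d) 0) / d ^ 2)
        = k * ((∑ i, ∑ j, Y i j) / d - ∑ i, R i * max (R i - d) 0 / d ^ 2
          - ∑ j, C j * max (C j - d) 0 / d ^ 2) := by
      simp only [← Finset.mul_sum, Finset.sum_sub_distrib, ← Finset.sum_div, ← Finset.sum_mul]
      congr 3
      rw [Finset.sum_comm]
      simp only [← Finset.sum_mul, hC]
    rw [e]
    have a1 := Finset.sum_le_sum fun i (_ : i ∈ Finset.univ) => aux_quad (r := R i) hd hδ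
    have a2 := Finset.sum_le_sum fun i (_ : i ∈ Finset.univ) => aux_quad (r := C i) hd hδ
    exact mul_le_mul_of_nonneg_left (by linarith) hk
  · calc ∑ j, Y i j / M i j ≤ ∑ j, Y i j / max d (R i) := by
          refine Finset.sum_le_sum fun j _ => div_le_div_of_nonneg_left (hY i j)
            (hd.trans_le (le_max_left _ _)) ?_
          exact max_le_max le_rfl (le_max_left _ _)
      _ = R i / max d (R i) := by rw [Finset.sum_div]
      _ ≤ 1 := div_le_one_of_le₀ (le_max_right _ _) (hd.le.trans (le_max_left _ _))
  · calc ∑ i, Y i j / M i j ≤ ∑ i, Y i j / max d (C j) := by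
          refine Finset.sum_le_sum fun i _ => div_le_div_of_nonneg_left (hY i j)
            (hd.trans_le (le_max_left _ _)) ?_
          exact max_le_max le_rfl (le_max_right _ _)
      _ = C j / max d (C j) := by rw [Finset.sum_div]
      _ ≤ 1 := div_le_one_of_le₀ (le_max_right _ _) (hd.le.trans (le_max_left _ _))

instance aux_prob_cell {n : ℕ} [NeZero n] : IsProbabilityMeasure (cellMeasure n) := by
  constructor
  have : (n : ENNReal) ≠ 0 := by exact_mod_cast NeZero.ne n
  simp only [cellMeasure, Measure.smul_apply, Measure.count_univ, smul_eq_mul]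
  rw [ENat.card_eq_coe_fintype_card]
  simp only [Fintype.card_prod, Fintype.card_fin]
  push_cast
  rw [← sq]
  exact ENNReal.inv_mul_cancel (by simpa using this) (by simp)

instance aux_prob_grid {m n : ℕ} [NeZero n] : IsProbabilityMeasure (gridMeasure m n) := by
  unfold gridMeasure; infer_instance

lemma aux_int {m n : ℕ} [NeZero n] (f : (Fin m → Fin n × Fin n) → ℝ) :
    Integrable f (gridMeasure m n) := Integrable.of_finite

lemma aux_cyl {m n : ℕ} [NeZero n] (T : Finset (Fin m)) (g : Fin m → Fin n × Fin n) :
    ∫ ω, (if ∀ t ∈ T, ω t = g t then (1 : ℝ) else 0) ∂(gridMeasure m n)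
      = (1 / (n : ℝ) ^ 2) ^ T.card := by
  classical
  have hset : {ω : Fin m → Fin n × Fin n | ∀ t ∈ T, ω t = g t}
      = Set.pi Set.univ (fun t => if t ∈ T then {g t} else Set.univ) := by
    ext ω
    simp only [Set.mem_ofPred_eq, Set.mem_pi, Set.mem_univ, true_imp_iff]
    refine forall_congr' fun t => ?_
    by_cases h : t ∈ T <;> simp [h]
  have h1 : (fun ω : Fin m → Fin n × Fin n => (if ∀ t ∈ T, ω t = g t then (1 : ℝ) else 0))
      = Set.indicator {ω | ∀ t ∈ T, ω t = g t} 1 := by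
    ext ω; simp [Set.indicator_apply]
  rw [h1, integral_indicator_one (Set.toFinite _).measurableSet, hset, measureReal_def, gridMeasure,
    Measure.pi_pi, ENNReal.toReal_prod]
  have h2 : ∀ t, (cellMeasure n (if t ∈ T then {g t} else Set.univ)).toReal
      = if t ∈ T then 1 / (n : ℝ) ^ 2 else 1 := by
    intro t
    split_ifs
    · simp [cellMeasure]
    · simp
  simp only [h2]
  rw [Finset.prod_ite_mem]
  simp

lemma aux_choose {m n : ℕ} (i j : Fin n) (k : ℕ) (ω : Fin m → Fin n × Fin n) :
    (((cellCount i j ω).choose k : ℕ) : ℝ)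
      = ∑ T ∈ Finset.powersetCard k (Finset.univ : Finset (Fin m)),
        (if ∀ t ∈ T, ω t = (i, j) then (1 : ℝ) else 0) := by
  rw [cellCount, ← Finset.card_powersetCard, Finset.sum_boole]
  congr 2
  ext T
  simp only [Finset.mem_powersetCard, Finset.mem_filter, Finset.subset_iff, Finset.mem_univ,
    true_and, implies_true]
  tauto

lemma aux_mean {m n : ℕ} [NeZero n] (i j : Fin n) (k : ℕ) :
    ∫ ω, (((cellCount i j ω).choose k : ℕ) : ℝ) ∂(gridMeasure m n)
      = (m.choose k) * (1 / (n : ℝ) ^ 2) ^ k := by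
  simp only [aux_choose]
  rw [integral_finsetSum _ (fun _ _ => aux_int _)]
  rw [Finset.sum_congr rfl (g := fun _ => (1 / (n : ℝ) ^ 2) ^ k)]
  · simp
  · intro T hT
    rw [aux_cyl T (fun _ => (i, j)), (Finset.mem_powersetCard.1 hT).2]

lemma aux_cross {m n : ℕ} [NeZero n] (i j i' j' : Fin n) (h : (i, j) ≠ (i', j')) (k : ℕ) :
    ∫ ω, (((cellCount i j ω).choose k : ℕ) : ℝ) * (((cellCount i' j' ω).choose k : ℕ) : ℝ)
        ∂(gridMeasure m n)
      ≤ ((m.choose k) * (1 / (n : ℝ) ^ 2) ^ k) ^ 2 := by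
  classical
  simp only [aux_choose, Finset.sum_mul_sum]
  rw [integral_finsetSum _ (fun _ _ => aux_int _)]
  have h1 : ∀ T ∈ Finset.powersetCard k (Finset.univ : Finset (Fin m)),
      ∀ T' ∈ Finset.powersetCard k (Finset.univ : Finset (Fin m)),
      ∫ ω, (if ∀ t ∈ T, ω t = (i, j) then (1 : ℝ) else 0) *
        (if ∀ t ∈ T', ω t = (i', j') then (1 : ℝ) else 0) ∂(gridMeasure m n)
        ≤ (1 / (n : ℝ) ^ 2) ^ (2 * k) := by
    intro T hT T' hT'
    rw [Finset.mem_powersetCard] at hT hT'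
    by_cases hd : Disjoint T T'
    · have := aux_cyl (m := m) (T ∪ T') (fun t => if t ∈ T then (i, j) else (i', j'))
      rw [Finset.card_union_of_disjoint hd, hT.2, hT'.2, ← two_mul] at this
      rw [← this]
      apply le_of_eq
      congr 1
      ext ω
      rw [ite_zero_mul_ite_zero, one_mul]
      refine if_congr ?_ rfl rfl
      constructor
      · rintro ⟨h1, h2⟩ t ht
        split_ifs with h3
        · exact h1 t h3
        · exact h2 t ((Finset.mem_union.1 ht).resolve_left h3)
      · intro h1
        refine ⟨fun t ht => ?_, fun t ht => ?_⟩
        · simpa [ht] using h1 t (Finset.mem_union_left _ ht)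
        · simpa [Finset.disjoint_right.1 hd ht] using h1 t (Finset.mem_union_right _ ht)
    · rw [Finset.not_disjoint_iff] at hd
      obtain ⟨t, ht, ht'⟩ := hd
      have h0 : ∀ ω : Fin m → Fin n × Fin n, (if ∀ t ∈ T, ω t = (i, j) then (1 : ℝ) else 0) *
        (if ∀ t ∈ T', ω t = (i', j') then (1 : ℝ) else 0) = 0 := by
        intro ω
        by_cases h1 : ∀ t ∈ T, ω t = (i, j)
        · have : ¬ ∀ t ∈ T', ω t = (i', j') := fun h2 => h ((h1 t ht).symm.trans (h2 t ht'))
          rw [if_neg this, mul_zero]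
        · rw [if_neg h1, zero_mul]
      simp only [h0, integral_zero]
      positivity
  calc _ ≤ ∑ T ∈ Finset.powersetCard k (Finset.univ : Finset (Fin m)),
        ∑ T' ∈ Finset.powersetCard k (Finset.univ : Finset (Fin m)),
          (1 / (n : ℝ) ^ 2) ^ (2 * k) := by
        refine Finset.sum_le_sum fun T hT => ?_
        rw [integral_finsetSum _ (fun _ _ => aux_int _)]
        exact Finset.sum_le_sum fun T' hT' => h1 T hT T' hT'
    _ = _ := by simp; ring

lemma aux_vander (x k : ℕ) :
    (x.choose k) ^ 2 = ∑ s ∈ Finset.range (k + 1), k.choose s * ((k + s).choose k * x.choose (k + s)) := by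
  rcases lt_or_ge x k with h | h
  · rw [Nat.choose_eq_zero_of_lt h]
    symm
    rw [zero_pow two_ne_zero]
    refine Finset.sum_eq_zero fun s _ => ?_
    rw [Nat.choose_eq_zero_of_lt (show x < k + s by omega)]; simp
  · obtain ⟨y, rfl⟩ := Nat.exists_eq_add_of_le h
    have hv := Nat.add_choose_eq y k k
    rw [Finset.Nat.sum_antidiagonal_eq_sum_range_succ_mk] at hv
    rw [sq, show (k + y).choose k * (k + y).choose k = (k + y).choose k * (y + k).choose k by
      rw [add_comm y k], hv, Finset.mul_sum]
    refine Finset.sum_congr rfl fun s hs => ?_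
    have hs' : s ≤ k := by simpa [Nat.lt_succ_iff] using hs
    have h3 : (k + y).choose (k + s) * (k + s).choose k = (k + y).choose k * y.choose s := by
      rcases le_or_gt s y with h4 | h4
      · have := Nat.choose_mul (n := k + y) (k := k + s) (s := k) (by omega)
        simpa using this
      · rw [Nat.choose_eq_zero_of_lt h4, Nat.choose_eq_zero_of_lt (show k + y < k + s by omega)]
        simp
    simp only
    rw [Nat.choose_symm hs', mul_comm ((k+s).choose k), h3]
    ring

lemma aux_sq {m n : ℕ} [NeZero n] (i j : Fin n) (k : ℕ) (hl : (m : ℝ) / (n : ℝ) ^ 2 ≤ 1) :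
    ∫ ω, (((cellCount i j ω).choose k : ℕ) : ℝ) ^ 2 ∂(gridMeasure m n)
      ≤ 2 ^ k * ((m.choose k) * (1 / (n : ℝ) ^ 2) ^ k) := by
  have h0 : ∀ ω : Fin m → Fin n × Fin n, (((cellCount i j ω).choose k : ℕ) : ℝ) ^ 2
    = ∑ s ∈ Finset.range (k + 1), ((k.choose s : ℕ) : ℝ) * (((k + s).choose k : ℕ) *
        (((cellCount i j ω).choose (k + s) : ℕ) : ℝ)) := by
    intro ω; exact_mod_cast aux_vander _ k
  simp only [h0]
  rw [integral_finsetSum _ (fun _ _ => aux_int _)]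
  simp only [integral_const_mul, aux_mean]
  have h2 : (2 : ℝ) ^ k = ∑ s ∈ Finset.range (k + 1), ((k.choose s : ℕ) : ℝ) := by
    exact_mod_cast (Nat.sum_range_choose k).symm
  rw [h2, Finset.sum_mul]
  refine Finset.sum_le_sum fun s _ => mul_le_mul_of_nonneg_left ?_ (by positivity)
  have h3 : (k + s).choose k * m.choose (k + s) ≤ m.choose k * m ^ s := by
    rcases le_or_gt (k + s) m with h4 | h4
    · have := Nat.choose_mul (n := m) (k := k + s) (s := k) (by omega)
      rw [mul_comm, this]
      refine Nat.mul_le_mul_left _ ?_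
      simp only [Nat.add_sub_cancel_left]
      exact (Nat.choose_le_pow _ _).trans (Nat.pow_le_pow_left (by omega) _)
    · rw [Nat.choose_eq_zero_of_lt h4]; simp
  have h3' : (((k + s).choose k : ℕ) : ℝ) * (m.choose (k + s) : ℕ) ≤ (m.choose k : ℕ) * (m : ℝ) ^ s := by
    exact_mod_cast h3
  calc _ = ((((k + s).choose k : ℕ) : ℝ) * (m.choose (k + s) : ℕ)) * (1 / (n : ℝ) ^ 2) ^ (k + s) := by ring
    _ ≤ ((m.choose k : ℕ) * (m : ℝ) ^ s) * (1 / (n : ℝ) ^ 2) ^ (k + s) :=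
        mul_le_mul_of_nonneg_right h3' (by positivity)
    _ = ((m.choose k : ℕ) * (1 / (n : ℝ) ^ 2) ^ k) * ((m : ℝ) / (n : ℝ) ^ 2) ^ s := by
        rw [pow_add, div_pow, div_pow, div_pow]; ring
    _ ≤ ((m.choose k : ℕ) * (1 / (n : ℝ) ^ 2) ^ k) * 1 :=
        mul_le_mul_of_nonneg_left (pow_le_one₀ (by positivity) hl) (by positivity)
    _ = _ := mul_one _

lemma aux_var {m n : ℕ} [NeZero n] (f : Fin n → Fin n × Fin n) (hf : Function.Injective f) (k : ℕ)
    (hl : (m : ℝ) / (n : ℝ) ^ 2 ≤ 1) :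
    ∫ ω, (∑ l, (((cellCount (f l).1 (f l).2 ω).choose k : ℕ) : ℝ)
        - n * ((m.choose k) * (1 / (n : ℝ) ^ 2) ^ k)) ^ 2 ∂(gridMeasure m n)
      ≤ n * (2 ^ k * ((m.choose k) * (1 / (n : ℝ) ^ 2) ^ k)) := by
  set μ : ℝ := (m.choose k) * (1 / (n : ℝ) ^ 2) ^ k with hμ
  have hμ0 : 0 ≤ μ := by positivity
  set Y : Fin n → (Fin m → Fin n × Fin n) → ℝ :=
    fun l ω => (((cellCount (f l).1 (f l).2 ω).choose k : ℕ) : ℝ) with hY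
  have e : ∀ ω, (∑ l, Y l ω - n * μ) ^ 2
      = ∑ l, ∑ l', Y l ω * Y l' ω - (2 * (n * μ)) * ∑ l, Y l ω + (n * μ) ^ 2 := by
    intro ω
    rw [← Finset.sum_mul_sum]; ring
  change ∫ ω, (∑ l, Y l ω - n * μ) ^ 2 ∂(gridMeasure m n) ≤ _
  simp only [e]
  rw [integral_add (aux_int _) (aux_int _), integral_sub (aux_int _) (aux_int _),
    integral_const_mul, integral_finsetSum _ (fun _ _ => aux_int _),
    integral_finsetSum _ (fun _ _ => aux_int _)]
  have h1 : ∀ l, ∫ ω, Y l ω ∂(gridMeasure m n) = μ := fun l => aux_mean _ _ _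
  have h2 : ∀ l, ∫ ω, ∑ l', Y l ω * Y l' ω ∂(gridMeasure m n) ≤ 2 ^ k * μ + n * μ ^ 2 := by
    intro l
    rw [integral_finsetSum _ (fun _ _ => aux_int _)]
    have h3 : ∀ l', ∫ ω, Y l ω * Y l' ω ∂(gridMeasure m n)
        ≤ (if l = l' then 2 ^ k * μ else 0) + μ ^ 2 := by
      intro l'
      split_ifs with h
      · subst h
        have := aux_sq (m := m) (f l).1 (f l).2 k hl
        simp only [← sq]
        have h4 : 0 ≤ μ ^ 2 := sq_nonneg _
        linarith
      · rw [zero_add]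
        exact aux_cross _ _ _ _ (fun h' => h (hf h')) k
    refine (Finset.sum_le_sum fun l' _ => h3 l').trans ?_
    rw [Finset.sum_add_distrib]
    simp
  have h5 := Finset.sum_le_sum fun l (_ : l ∈ Finset.univ) => h2 l
  simp only [h1]
  simp only [Finset.sum_const, Finset.card_univ, Fintype.card_fin, nsmul_eq_mul, integral_const,
    probReal_univ, one_smul] at h5 ⊢
  nlinarith [h5]

lemma aux_lower_s6 {m n : ℕ} [NeZero n] (k : ℕ) (hl : (m : ℝ) / (n : ℝ) ^ 2 ≤ 1) {d δ : ℝ}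
    (hd : d = n * ((m.choose k) * (1 / (n : ℝ) ^ 2) ^ k)) (hd0 : 0 < d) (hδ : 0 < δ) :
    k * (n - 2 * (n * (δ + (1 + 1 / δ) * (2 ^ k / d)))) ≤ EmaxAssign m n := by
  set Y : Fin n → Fin n → (Fin m → Fin n × Fin n) → ℝ :=
    fun i j ω => (((cellCount i j ω).choose k : ℕ) : ℝ) with hY
  have hn : (n : ℝ) ≠ 0 := by exact_mod_cast NeZero.ne n
  have h1 : ∀ ω : Fin m → Fin n × Fin n, (k : ℝ) * ((∑ i, ∑ j, Y i j ω) / d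
      - ∑ i, (δ + (1 + 1 / δ) * ((∑ j, Y i j ω - d) ^ 2 / d ^ 2))
      - ∑ j, (δ + (1 + 1 / δ) * ((∑ i, Y i j ω - d) ^ 2 / d ^ 2))) ≤ maxAssign ω := by
    intro ω
    refine aux_det (k : ℝ) (by positivity) (fun i j => (cellCount i j ω : ℝ)) (fun i j => Y i j ω)
      (fun i j => by positivity) (fun i j => by positivity) (fun i j h => ?_) hd0 hδ
    by_contra h'
    push Not at h'
    apply h
    simp only [hY]
    rw [Nat.choose_eq_zero_of_lt (by exact_mod_cast h')]; simp
  refine le_trans ?_ (integral_mono (aux_int _) (aux_int _) h1)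
  rw [integral_const_mul]
  refine mul_le_mul_of_nonneg_left ?_ (by positivity)
  rw [integral_sub (aux_int _) (aux_int _), integral_sub (aux_int _) (aux_int _), integral_div,
    integral_finsetSum _ (fun _ _ => aux_int _), integral_finsetSum _ (fun _ _ => aux_int _),
    integral_finsetSum _ (fun _ _ => aux_int _)]
  have e1 : ∀ i, ∫ ω, ∑ j, Y i j ω ∂(gridMeasure m n) = d := by
    intro i
    rw [integral_finsetSum _ (fun _ _ => aux_int _)]
    simp only [hY, aux_mean]
    simp [hd]
  have key : ∀ f : Fin n → Fin n × Fin n, Function.Injective f →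
      ∫ ω, (δ + (1 + 1 / δ) * ((∑ l, Y (f l).1 (f l).2 ω - d) ^ 2 / d ^ 2)) ∂(gridMeasure m n)
        ≤ δ + (1 + 1 / δ) * (2 ^ k / d) := by
    intro f hf
    rw [integral_add (aux_int _) (aux_int _), integral_const_mul, integral_div]
    have := aux_var (m := m) f hf k hl
    rw [← hd] at this
    have h3 : (n : ℝ) * (2 ^ k * ((m.choose k) * (1 / (n : ℝ) ^ 2) ^ k)) = 2 ^ k * d := by
      rw [hd]; ring
    rw [h3] at this
    simp only [integral_const, probReal_univ, one_smul]
    have h4 : 2 ^ k / d = 2 ^ k * d / d ^ 2 := by field_simp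
    rw [h4]
    gcongr
  have k1 := Finset.sum_le_sum fun i (_ : i ∈ (Finset.univ : Finset (Fin n))) =>
    key (fun j => (i, j)) (fun a b h => by simpa using h)
  have k2 := Finset.sum_le_sum fun j (_ : j ∈ (Finset.univ : Finset (Fin n))) =>
    key (fun i => (i, j)) (fun a b h => by simpa using h)
  simp only [e1]
  simp only [Finset.sum_const, Finset.card_univ, Fintype.card_fin, nsmul_eq_mul] at k1 k2 ⊢
  rw [mul_div_assoc, div_self hd0.ne', mul_one]
  linarith

lemma aux_sub_le_choose (x k : ℕ) : x ≤ k + x.choose (k + 1) := by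
  rcases le_or_gt x k with h | h
  · omega
  · obtain ⟨y, rfl⟩ := Nat.exists_eq_add_of_lt h
    induction y with
    | zero => simp
    | succ y ih =>
      have := ih (by omega)
      have h2 := Nat.choose_succ_succ' (k + y + 1) k
      have h3 : 0 < (k + y + 1).choose k := Nat.choose_pos (by omega)
      rw [show k + (y + 1) + 1 = (k + y + 1) + 1 by ring]
      omega

lemma aux_upper_s6 {m n : ℕ} [NeZero n] (k : ℕ) :
    EmaxAssign m n ≤ k * n + n ^ 2 * ((m : ℝ) / (n : ℝ) ^ 2) ^ (k + 1) := by
  have h1 : ∀ ω : Fin m → Fin n × Fin n, maxAssign ω ≤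
      k * n + ∑ i : Fin n, ∑ j : Fin n, (((cellCount i j ω).choose (k + 1) : ℕ) : ℝ) := by
    intro ω
    refine ciSup_le fun σ => ?_
    have h2 : ∀ i : Fin n, (cellCount i (σ i) ω : ℝ) ≤
        k + ∑ j : Fin n, (((cellCount i j ω).choose (k + 1) : ℕ) : ℝ) := by
      intro i
      have h3 : (cellCount i (σ i) ω : ℝ) ≤ k + (((cellCount i (σ i) ω).choose (k + 1) : ℕ) : ℝ) := by
        exact_mod_cast aux_sub_le_choose _ k
      have h4 := Finset.single_le_sum
        (f := fun j : Fin n => (((cellCount i j ω).choose (k + 1) : ℕ) : ℝ))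
        (fun j _ => by positivity) (Finset.mem_univ (σ i))
      linarith
    refine (Finset.sum_le_sum fun i _ => h2 i).trans ?_
    rw [Finset.sum_add_distrib]
    simp [mul_comm]
  refine (integral_mono (aux_int _) (aux_int _) h1).trans ?_
  rw [integral_add (aux_int _) (aux_int _), integral_finsetSum _ (fun _ _ => aux_int _)]
  have h5 : ∀ i : Fin n, ∫ ω, ∑ j : Fin n, (((cellCount i j ω).choose (k + 1) : ℕ) : ℝ)
      ∂(gridMeasure m n) = n * ((m.choose (k + 1)) * (1 / (n : ℝ) ^ 2) ^ (k + 1)) := by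
    intro i
    rw [integral_finsetSum _ (fun _ _ => aux_int _)]
    simp only [aux_mean]
    simp
  simp only [h5, integral_const, probReal_univ, one_smul, Finset.sum_const, Finset.card_univ,
    Fintype.card_fin, nsmul_eq_mul]
  have h6 : ((m.choose (k + 1) : ℕ) : ℝ) ≤ (m : ℝ) ^ (k + 1) := by
    exact_mod_cast Nat.choose_le_pow _ _
  rw [← mul_assoc, ← sq, div_eq_mul_one_div (m : ℝ), mul_pow]
  gcongr

/-- **Rather sparse matrices, regular case.**  If `m(n) p_n = c n^{-a} (1 + o(1))` with
`c > 0`, `a ∈ (0,1)`, and `a ∉ {1/k : k ∈ ℕ}`, then there is a unique positive integer `k`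
with `1/(k+1) < a < 1/k`, and `E[max_σ ∑ i, X_{i σ(i)}] = k n (1 + o(1))`. -/
theorem expected_max_ratherSparse (m : ℕ → ℕ) (hm : ∀ n, 0 < m n) (c a : ℝ)
    (hc : 0 < c) (ha0 : 0 < a) (ha1 : a < 1)
    (hreg : ∀ k : ℕ, a ≠ 1 / (k : ℝ))
    (hmp : Tendsto (fun n : ℕ => ((m n : ℝ) / (n : ℝ) ^ 2) / (c * (n : ℝ) ^ (-a)))
      atTop (nhds 1)) :
    (∃! k : ℕ, 0 < k ∧ 1 / ((k : ℝ) + 1) < a ∧ a < 1 / (k : ℝ)) ∧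
      ∀ k : ℕ, 0 < k → 1 / ((k : ℝ) + 1) < a → a < 1 / (k : ℝ) →
        Tendsto (fun n : ℕ => EmaxAssign (m n) n / ((k : ℝ) * (n : ℝ))) atTop (nhds 1) := by
  constructor
  · have hk1 : 1 ≤ ⌊1 / a⌋₊ := by
      rw [Nat.one_le_floor_iff]
      rw [le_div_iff₀ ha0]; linarith
    have hk0 : (0 : ℝ) < (⌊1 / a⌋₊ : ℝ) := by exact_mod_cast hk1
    refine ⟨⌊1 / a⌋₊, ⟨hk1, ?_, ?_⟩, ?_⟩
    · rw [div_lt_comm₀ (by positivity) ha0]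
      exact Nat.lt_floor_add_one _
    · refine lt_of_le_of_ne ?_ (hreg _)
      rw [le_div_comm₀ ha0 hk0]
      exact Nat.floor_le (by positivity)
    · rintro k ⟨h0, h1, h2⟩
      have hk : (0 : ℝ) < k := by exact_mod_cast h0
      symm
      rw [Nat.floor_eq_iff (by positivity)]
      rw [div_lt_comm₀ (by positivity) ha0] at h1
      rw [lt_div_comm₀ ha0 hk] at h2
      exact ⟨h2.le, h1⟩
  · intro k hk h1 h2
    have hkR : (0 : ℝ) < k := by exact_mod_cast hk
    have h1' : 1 < a * (k + 1) := by rwa [div_lt_iff₀ (by positivity)] at h1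
    have h2' : a * k < 1 := by rwa [lt_div_iff₀ hkR] at h2
    set L : ℕ → ℝ := fun n => (m n : ℝ) / (n : ℝ) ^ 2 with hL
    set r : ℕ → ℝ := fun n => L n / (c * (n : ℝ) ^ (-a)) with hr
    have hLr : ∀ n : ℕ, 0 < n → L n = r n * (c * (n : ℝ) ^ (-a)) := by
      intro n hn
      have : (0 : ℝ) < (n : ℝ) ^ (-a) := Real.rpow_pos_of_pos (by exact_mod_cast hn) _
      rw [hr]; field_simp
    have hpow : ∀ s : ℕ, ∀ᶠ n : ℕ in atTop,
        (n : ℝ) * L n ^ s = (r n * c) ^ s * (n : ℝ) ^ (1 - a * s) := by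
      intro s
      filter_upwards [eventually_gt_atTop 0] with n hn
      have hnR : (0 : ℝ) < n := by exact_mod_cast hn
      rw [hLr n hn, ← mul_assoc, mul_pow, ← Real.rpow_natCast ((n : ℝ) ^ (-a)), ← Real.rpow_mul hnR.le,
        sub_eq_add_neg, Real.rpow_add hnR, Real.rpow_one, neg_mul]
      ring
    have hrc : ∀ s : ℕ, Tendsto (fun n => (r n * c) ^ s) atTop (nhds (c ^ s)) := by
      intro s
      have := (hmp.mul_const c).pow s
      simpa using this
    have hL0 : Tendsto L atTop (nhds 0) := by
      have hz : Tendsto (fun n : ℕ => (n : ℝ) ^ (-a)) atTop (nhds 0) :=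
        (tendsto_rpow_neg_atTop ha0).comp tendsto_natCast_atTop_atTop
      have := hmp.mul (hz.const_mul c)
      simp only [mul_zero] at this
      refine this.congr' ?_
      filter_upwards [eventually_gt_atTop 0] with n hn
      exact (hLr n hn).symm
    have hup : Tendsto (fun n : ℕ => (n : ℝ) * L n ^ (k + 1)) atTop (nhds 0) := by
      have hz : Tendsto (fun n : ℕ => (n : ℝ) ^ (-(a * ((k + 1 : ℕ) : ℝ) - 1))) atTop (nhds 0) :=
        (tendsto_rpow_neg_atTop (by push_cast; linarith)).comp tendsto_natCast_atTop_atTop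
      have := (hrc (k + 1)).mul hz
      rw [mul_zero] at this
      refine this.congr' ?_
      filter_upwards [hpow (k + 1)] with n hn
      rw [hn, neg_sub]
    have hlow : Tendsto (fun n : ℕ => (n : ℝ) * L n ^ k) atTop atTop := by
      have hz : Tendsto (fun n : ℕ => (n : ℝ) ^ (1 - a * (k : ℝ))) atTop atTop :=
        (tendsto_rpow_atTop (by linarith)).comp tendsto_natCast_atTop_atTop
      have := (hrc k).pos_mul_atTop (by positivity) hz
      refine this.congr' ?_
      filter_upwards [hpow k] with n hn
      rw [hn]
    have hmtop : ∀ᶠ n : ℕ in atTop, 2 * k ≤ m n := by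
      -- `n * L ≥ n * L^k` eventually, `m = n * (n * L)`
      filter_upwards [hlow.eventually_ge_atTop ((2 * k : ℕ) : ℝ), hL0.eventually_le_const zero_lt_one,
        eventually_gt_atTop 0] with n h3 h4 h5
      have hnR : (1 : ℝ) ≤ n := by exact_mod_cast h5
      have hLn : 0 ≤ L n := by positivity
      have h6 : L n ^ k ≤ L n := pow_le_of_le_one hLn h4 hk.ne'
      have h7 : (m n : ℝ) = n * (n * L n) := by
        simp only [hL]; field_simp
      have : ((2 * k : ℕ) : ℝ) ≤ m n := by
        rw [h7]
        have h8 : (n : ℝ) * L n ^ k ≤ n * L n := by gcongr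
        have h9 : (n : ℝ) * L n ≤ n * (n * L n) := le_mul_of_one_le_left (by positivity) hnR
        linarith
      exact_mod_cast this
    set d : ℕ → ℝ := fun n => n * (((m n).choose k) * (1 / (n : ℝ) ^ 2) ^ k) with hd
    have hdtop : Tendsto d atTop atTop := by
      have h3 : Tendsto (fun n : ℕ => ((n : ℝ) * L n ^ k) * (1 / (2 ^ k * (k.factorial : ℝ)))) atTop atTop :=
        hlow.atTop_mul_const (by positivity)
      refine tendsto_atTop_mono' _ ?_ h3
      filter_upwards [hmtop] with n hn
      have h4 := Nat.pow_le_choose (α := ℝ) k (m n)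
      have h5 : (m n : ℝ) / 2 ≤ ((m n + 1 - k : ℕ) : ℝ) := by
        rw [div_le_iff₀ (by norm_num)]
        exact_mod_cast (by omega : m n ≤ (m n + 1 - k) * 2)
      have h6 : ((m n : ℝ) / 2) ^ k / k.factorial ≤ (m n).choose k := by
        refine le_trans ?_ h4
        gcongr
      calc _ = (n : ℝ) * ((((m n : ℝ) / 2) ^ k / k.factorial) * (1 / (n : ℝ) ^ 2) ^ k) := by
            simp only [hL, div_pow]; ring
        _ ≤ d n := by simp only [hd]; gcongr
    have hsqrt : Tendsto (fun n => Real.sqrt (d n)) atTop atTop :=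
      Real.tendsto_sqrt_atTop.comp hdtop
    have hlim1 : Tendsto (fun n => 1 - 2 * (1 / Real.sqrt (d n)
        + 2 ^ k * (1 / d n + 1 / Real.sqrt (d n)))) atTop (nhds 1) := by
      have i1 : Tendsto (fun n => 1 / Real.sqrt (d n)) atTop (nhds 0) := by
        simp only [one_div]; exact hsqrt.inv_tendsto_atTop
      have i2 : Tendsto (fun n => 1 / d n) atTop (nhds 0) := by
        simp only [one_div]; exact hdtop.inv_tendsto_atTop
      have := ((i1.add ((i2.add i1).const_mul (2 ^ k))).const_mul 2).const_sub 1
      simpa using this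
    have hlim2 : Tendsto (fun n : ℕ => 1 + (n : ℝ) * L n ^ (k + 1) / k) atTop (nhds 1) := by
      simpa using (hup.div_const (k : ℝ)).const_add 1
    refine tendsto_of_tendsto_of_tendsto_of_le_of_le' hlim1 hlim2 ?_ ?_
    · filter_upwards [hdtop.eventually_gt_atTop 0, hL0.eventually_le_const zero_lt_one,
        eventually_gt_atTop 0] with n h3 h4 h5
      have : NeZero n := ⟨h5.ne'⟩
      have hnR : (0 : ℝ) < n := by exact_mod_cast h5
      have hs : 0 < Real.sqrt (d n) := Real.sqrt_pos.2 h3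
      have h6 := aux_lower_s6 (m := m n) (n := n) k h4 (d := d n) rfl h3 (one_div_pos.2 hs)
      rw [le_div_iff₀ (by positivity)]
      refine le_trans (le_of_eq ?_) h6
      have h7 : (1 + 1 / (1 / Real.sqrt (d n))) * (2 ^ k / d n)
          = 2 ^ k * (1 / d n + 1 / Real.sqrt (d n)) := by
        have h8 : 1 / Real.sqrt (d n) = Real.sqrt (d n) / d n := by
          rw [div_eq_div_iff hs.ne' h3.ne', one_mul, Real.mul_self_sqrt h3.le]
        rw [one_div_one_div, h8]
        ring
      rw [h7]
      ring
    · filter_upwards [eventually_gt_atTop 0] with n h5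
      have : NeZero n := ⟨h5.ne'⟩
      have hnR : (0 : ℝ) < n := by exact_mod_cast h5
      rw [div_le_iff₀ (by positivity)]
      refine (aux_upper_s6 (m := m n) (n := n) k).trans (le_of_eq ?_)
      simp only [hL]
      field_simp

end
end
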